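/- arXiv:1104.5033 — 2 statements merged into one kernel-verified Lean document; each statement's English description precedes it below -/
import Mathlib

section
/- Fix d ≥ 1, an integer L ≥ 2, β > 0, and integers k > ℓ ≥ 1 with γ = 2^{−k} and δ = ℓ/k. Then there is a constant c > 0, depending only on d, β and J, such that for every coarse-grained configuration σ_δ ∈ Ω^{(δ)}_{L,γ}, | log ( Σ_{s ∈ E(σ_δ)} e^{−βH_{γ,L}(s)} ) + β γ^{−d} F(σ_δ) | ≤ c · γ^{−d} L^d ( γ^δ + γ^{d(1−δ)} log(1/γ) ). -/
open MeasureTheory Real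

/-- The `d`-dimensional torus `(ℝ/Lℤ)^d` with its Lebesgue (Haar) measure. -/
abbrev Torus (d L : ℕ) := Fin d → AddCircle (L : ℝ)

/-- Geodesic (Euclidean) distance on the torus. -/
noncomputable def torusDist {d L : ℕ} (x y : Torus d L) : ℝ :=
  Real.sqrt (∑ i, (dist (x i) (y i)) ^ 2)

/-- The entropy function `i`. (`Real.log 0 = 0` gives the convention `0 · log 0 = 0`.) -/
noncomputable def ient (m : ℝ) : ℝ :=
  (1 - m) / 2 * Real.log ((1 - m) / 2) + (1 + m) / 2 * Real.log ((1 + m) / 2)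

/-- The hypotheses on the Kac interaction potential `J : [0,∞) → ℝ`: nonnegative, bounded,
continuous, supported in `[0,1]`, smooth and strictly decreasing on `[0,1]`, and normalized
so that `∫_{ℝ^d} J(|r|) dr = 1`. -/
structure KacPotential (d : ℕ) (J : ℝ → ℝ) : Prop where
  nonneg : ∀ r, 0 ≤ J r
  bounded : ∃ M, ∀ r, |J r| ≤ M
  continuous : Continuous J
  support : ∀ r, 1 < r → J r = 0
  strictAnti : StrictAntiOn J (Set.Icc 0 1)
  smooth : ContDiffOn ℝ (⊤ : ℕ∞) J (Set.Icc 0 1)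
  normalized : (∫ r : EuclideanSpace ℝ (Fin d), J ‖r‖) = 1

/-- The Gates–Penrose–Lebowitz free energy functional
`F(σ) = (1/β)∫ i(σ(x)) dx − (1/2)∫∫ J(|x−y|) σ(x) σ(y) dx dy`. -/
noncomputable def GPL (d L : ℕ) [Fact ((0:ℝ) < L)] (β : ℝ) (J : ℝ → ℝ)
    (σ : Torus d L → ℝ) : ℝ :=
  (1 / β) * (∫ x, ient (σ x))
    - (1 / 2) * ∫ x, ∫ y, J (torusDist x y) * σ x * σ y

open scoped Classical

/-- The representative coordinate in `[0, L)` of a point of the circle `ℝ/Lℤ`. -/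
noncomputable def torusCoord {L : ℕ} [Fact ((0:ℝ) < L)] (x : AddCircle (L:ℝ)) : ℝ :=
  ((AddCircle.equivIco (L:ℝ) 0) x).1

/-- Index of the dyadic cube of side `2^{-n}` (from the partition `Q^{(n)}`) containing `x`. -/
noncomputable def cubeIdx {d : ℕ} (L : ℕ) [Fact ((0:ℝ) < L)] (n : ℕ) (x : Torus d L) :
    Fin d → ℤ := fun i => ⌊torusCoord (x i) * 2 ^ n⌋

/-- The cube of the partition `Q^{(n)}` containing `x`. -/
noncomputable def cubeOf {d : ℕ} (L : ℕ) [Fact ((0:ℝ) < L)] (n : ℕ) (x : Torus d L) :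
    Set (Torus d L) := {y | cubeIdx L n y = cubeIdx L n x}

/-- Coarse graining `π^{(δ)}`: averaging over the cubes of side `2^{-n}` of `Q^{(n)}`. -/
noncomputable def coarse {d : ℕ} (L : ℕ) [Fact ((0:ℝ) < L)] (n : ℕ)
    (f : Torus d L → ℝ) : Torus d L → ℝ :=
  fun x => (∫ y in cubeOf L n x, f y) / (volume (cubeOf L n x)).toReal

/-- The microscopic lattice sites, indexing `γℤ^d ∩ T_L` with `γ = 2^{-k}`. -/
abbrev Site (d L k : ℕ) := Fin d → Fin (2 ^ k * L)

/-- Microscopic spin configurations (`true` = occupied, i.e. spin `+1`). -/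
abbrev ConfigSpace (d L k : ℕ) := Site d L k → Bool

/-- The spin value (`±1`) of a site. -/
def spin (b : Bool) : ℝ := if b then 1 else -1

/-- The position in the torus of a lattice site. -/
noncomputable def sitePos {d : ℕ} (L k : ℕ) (p : Site d L k) : Torus d L :=
  fun i => (((p i : ℝ) * (2:ℝ) ^ (-(k:ℤ)) : ℝ) : AddCircle (L:ℝ))

/-- The lattice site whose fine cube (of side `2^{-k}`) contains the point `x` of the torus. -/
noncomputable def siteOf {d : ℕ} (L k : ℕ) [Fact ((0:ℝ) < L)] (x : Torus d L) : Site d L k :=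
  fun i => ⟨(⌊torusCoord (x i) * 2 ^ k⌋).toNat % (2 ^ k * L),
    Nat.mod_lt _ (Nat.mul_pos (pow_pos (by norm_num) k)
      (by have h := (Fact.out : (0:ℝ) < L); exact_mod_cast h))⟩

/-- A microscopic configuration viewed as a `±1`-valued step function on the torus,
constant on each cube of the fine partition `Q^{(k)}`. -/
noncomputable def stepFun {d : ℕ} (L k : ℕ) [Fact ((0:ℝ) < L)]
    (s : ConfigSpace d L k) : Torus d L → ℝ :=
  fun x => spin (s (siteOf L k x))

/-- `γ = 2^{-k}`, the Kac scaling parameter. -/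
noncomputable def gam (k : ℕ) : ℝ := (2:ℝ) ^ (-(k:ℤ))

/-- The Kac Hamiltonian `H_{γ,L}(s) = -(γ^d/2) ∑_{x,y ∈ Λ_{L,γ}} J(|x-y|) s(x) s(y)`. -/
noncomputable def Ham {d : ℕ} (L k : ℕ) (J : ℝ → ℝ) (s : ConfigSpace d L k) : ℝ :=
  -((gam k) ^ d / 2) * ∑ p : Site d L k, ∑ q : Site d L k,
      J (torusDist (sitePos L k p) (sitePos L k q)) * spin (s p) * spin (s q)

/-- The number of occupied sites (sites with spin `+1`) of a configuration. -/
def numOnes {d : ℕ} (L k : ℕ) (s : ConfigSpace d L k) : ℕ :=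
  (Finset.univ.filter fun p => s p = true).card

/-- The canonical Gibbs probability, at inverse temperature `β` and particle number `Np`,
of an event `A` (as an event in `Ω_{L,γ,Np}`). -/
noncomputable def Pcan {d : ℕ} (L k : ℕ) (β : ℝ) (J : ℝ → ℝ) (Np : ℕ)
    (A : Set (ConfigSpace d L k)) : ℝ :=
  (∑ s ∈ Finset.univ.filter
      (fun s : ConfigSpace d L k => s ∈ A ∧ numOnes L k s = Np),
      Real.exp (-β * Ham L k J s)) /
  (∑ s ∈ Finset.univ.filter (fun s : ConfigSpace d L k => numOnes L k s = Np),
      Real.exp (-β * Ham L k J s))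

/-- The lift of a function on the torus to a (periodic) function on `ℝ^d`. -/
noncomputable def liftTorus {d L : ℕ} (φ : Torus d L → ℝ) : EuclideanSpace ℝ (Fin d) → ℝ :=
  fun v => φ (fun i => ((v i : ℝ) : AddCircle (L:ℝ)))


lemma aux_log_step (n : ℕ) : 1 / ((n:ℝ) + 2) ≤ Real.log ((n:ℝ) + 2) - Real.log ((n:ℝ) + 1) ∧
    Real.log ((n:ℝ) + 2) - Real.log ((n:ℝ) + 1) ≤ 1 / ((n:ℝ) + 1) := by
  have h1 : (0:ℝ) < (n:ℝ) + 1 := by positivity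
  have h2 : (0:ℝ) < (n:ℝ) + 2 := by positivity
  constructor
  · have := Real.one_sub_inv_le_log_of_pos (div_pos h2 h1)
    rw [Real.log_div h2.ne' h1.ne', inv_div] at this
    have e : 1 - ((n:ℝ) + 1) / (n + 2) = 1 / (n + 2) := by field_simp; ring
    linarith
  · have := Real.log_le_sub_one_of_pos (div_pos h2 h1)
    rw [Real.log_div h2.ne' h1.ne'] at this
    have e : ((n:ℝ) + 2) / (n + 1) - 1 = 1 / (n + 1) := by field_simp; ring
    linarith

lemma aux_fact (n : ℕ) :
    ((n:ℝ) + 1) * Real.log (n + 1) - (n + 1) ≤ Real.log ((n + 1).factorial) ∧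
    Real.log ((n + 1).factorial) ≤
      ((n:ℝ) + 1) * Real.log (n + 1) - (n + 1) + 1 + Real.log (n + 1) := by
  induction n with
  | zero => simp
  | succ n ih =>
    have h := aux_log_step n
    have h1 : (0:ℝ) < (n:ℝ) + 1 := by positivity
    have h2 : (0:ℝ) < (n:ℝ) + 2 := by positivity
    have e : Real.log ((n + 1 + 1).factorial) = Real.log ((n:ℝ) + 2) + Real.log ((n+1).factorial) := by
      rw [Nat.factorial_succ, Nat.cast_mul, Real.log_mul (by positivity) (by positivity)]
      push_cast
      congr 2; ring
    have e2 : (((n + 1 : ℕ) : ℝ) + 1) = (n:ℝ) + 2 := by push_cast; ring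
    rw [e, e2]
    obtain ⟨ha, hb⟩ := h
    rw [div_le_iff₀ h2] at ha
    rw [le_div_iff₀ h1] at hb
    constructor <;> nlinarith [ih.1, ih.2]

lemma aux_fact' (n : ℕ) :
    |Real.log (n.factorial) - ((n:ℝ) * Real.log n - n)| ≤ 1 + Real.log (n + 1) := by
  cases n with
  | zero => simp
  | succ n =>
    have h := aux_fact n
    have : Real.log ((n:ℝ) + 1) ≤ Real.log ((n:ℝ) + 1 + 1) :=
      Real.log_le_log (by positivity) (by linarith)
    have h0 : 0 ≤ Real.log ((n:ℝ) + 1) := Real.log_nonneg (by linarith [n.cast_nonneg (α := ℝ)])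
    push_cast
    rw [abs_le]
    constructor <;> linarith [h.1, h.2]

lemma aux_mlog (m n : ℕ) (hn : n ≠ 0) :
    (n:ℝ) * ((m:ℝ) / n * Real.log ((m:ℝ) / n)) = m * Real.log m - m * Real.log n := by
  have hn' : (n:ℝ) ≠ 0 := by exact_mod_cast hn
  by_cases hm : m = 0
  · simp [hm]
  · have hm' : (m:ℝ) ≠ 0 := by exact_mod_cast hm
    rw [Real.log_div hm' hn']
    field_simp

lemma aux_choose (n m : ℕ) (hm : m ≤ n) :
    |Real.log (n.choose m) + n * ient ((2 * m - n) / n)| ≤ 3 * (1 + Real.log (n + 1)) := by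
  by_cases hn : n = 0
  · subst hn
    have : m = 0 := by omega
    subst this
    simp
  obtain ⟨j, rfl⟩ := Nat.exists_eq_add_of_le hm
  have hn' : ((m + j : ℕ):ℝ) ≠ 0 := by exact_mod_cast hn
  have e1 : (1 - (2 * (m:ℝ) - (m + j : ℕ)) / (m + j : ℕ)) / 2 = (j:ℝ) / (m + j : ℕ) := by
    field_simp; push_cast; ring
  have e2 : (1 + (2 * (m:ℝ) - (m + j : ℕ)) / (m + j : ℕ)) / 2 = (m:ℝ) / (m + j : ℕ) := by
    field_simp; push_cast; ring
  unfold ient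
  rw [e1, e2, mul_add, aux_mlog _ _ hn, aux_mlog _ _ hn]
  have hc : Real.log ((m + j).choose m) = Real.log ((m + j).factorial) - Real.log (m.factorial)
      - Real.log (j.factorial) := by
    have := Nat.add_choose_mul_factorial_mul_factorial m j
    rw [← Nat.choose_symm_add] at this
    have h : (((m + j).choose m : ℕ) : ℝ) * m.factorial * j.factorial = (m + j).factorial := by
      exact_mod_cast this
    rw [← h, Real.log_mul, Real.log_mul]
    · ring
    · have := Nat.choose_pos hm
      positivity
    · positivity
    · have := Nat.choose_pos hm
      positivity
    · positivity
  rw [hc]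
  have f1 := aux_fact' (m + j)
  have f2 := aux_fact' m
  have f3 := aux_fact' j
  have g1 : Real.log ((m:ℝ) + 1) ≤ Real.log (((m + j : ℕ) : ℝ) + 1) :=
    Real.log_le_log (by positivity) (by push_cast; linarith [j.cast_nonneg (α := ℝ)])
  have g2 : Real.log ((j:ℝ) + 1) ≤ Real.log (((m + j : ℕ) : ℝ) + 1) :=
    Real.log_le_log (by positivity) (by push_cast; linarith [m.cast_nonneg (α := ℝ)])
  rw [abs_le] at *
  push_cast at *
  constructor <;> linarith [f1.1, f1.2, f2.1, f2.2, f3.1, f3.2]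

lemma aux_count {S B : Type*} [Fintype S] [Fintype B] (pr : S → B)
    (t : B → ℕ) :
    (Finset.univ.filter (fun s : S → Bool => ∀ b,
      (Finset.univ.filter (fun p => pr p = b ∧ s p = true)).card = t b)).card =
    ∏ b, ((Finset.univ.filter (fun p => pr p = b)).card).choose (t b) := by
  have : ∏ b, ((Finset.univ.filter (fun p => pr p = b)).card).choose (t b) =
      (Fintype.piFinset (fun b =>
        Finset.powersetCard (t b) (Finset.univ.filter (fun p => pr p = b)))).card := by
    rw [Fintype.card_piFinset]
    simp [Finset.card_powersetCard]
  rw [this]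
  refine Finset.card_nbij' (fun s b => Finset.univ.filter (fun p => pr p = b ∧ s p = true))
    (fun f p => decide (p ∈ f (pr p))) ?_ ?_ ?_ ?_
  · intro s hs
    simp only [Finset.coe_filter, Finset.mem_univ, true_and, Set.mem_ofPred_eq] at hs
    simp only [Fintype.coe_piFinset, Set.mem_pi, Finset.mem_coe, Finset.mem_powersetCard]
    intro b _
    refine ⟨?_, hs b⟩
    intro p hp
    simp at hp ⊢
    exact hp.1
  · intro f hf
    simp only [Fintype.coe_piFinset, Set.mem_pi, Finset.mem_coe, Finset.mem_powersetCard] at hf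
    simp only [Finset.coe_filter, Finset.mem_univ, true_and, Set.mem_ofPred_eq]
    intro b
    have h := hf b (Set.mem_univ _)
    rw [← h.2]
    congr 1
    ext p
    simp only [Finset.mem_filter, Finset.mem_univ, true_and, decide_eq_true_eq]
    constructor
    · rintro ⟨rfl, h'⟩; exact h'
    · intro hp
      have := h.1 hp
      simp at this
      exact ⟨this, by rw [this]; exact hp⟩
  · intro s hs
    ext p
    simp
  · intro f hf
    simp only [Fintype.coe_piFinset, Set.mem_pi, Finset.mem_coe, Finset.mem_powersetCard] at hf
    ext b p
    have h := hf b (Set.mem_univ _)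
    simp only [Finset.mem_filter, Finset.mem_univ, true_and, decide_eq_true_eq]
    constructor
    · rintro ⟨rfl, h'⟩; exact h'
    · intro hp
      have := h.1 hp
      simp at this
      exact ⟨this, by rw [this]; exact hp⟩

lemma aux_lip (d : ℕ) (J : ℝ → ℝ) (hJ : KacPotential d J) :
    ∃ Λ : ℝ, 0 ≤ Λ ∧ ∀ a b : ℝ, 0 ≤ a → 0 ≤ b → |J a - J b| ≤ Λ * |a - b| := by
  have h1 : J 1 = 0 := by
    have hc : Filter.Tendsto J (nhdsWithin 1 (Set.Ioi 1)) (nhds (J 1)) :=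
      hJ.continuous.continuousAt.tendsto.mono_left nhdsWithin_le_nhds
    refine tendsto_nhds_unique hc ?_
    refine tendsto_const_nhds.congr' ?_
    filter_upwards [self_mem_nhdsWithin] with x hx
    exact (hJ.support x hx).symm
  obtain ⟨K, hK⟩ := (hJ.smooth.of_le (m := 1) (by exact_mod_cast le_top)).exists_lipschitzOnWith
    (by simp) (convex_Icc 0 1) isCompact_Icc
  have key : ∀ a, 0 ≤ a → J a = J (min a 1) := by
    intro a ha
    rcases le_or_gt a 1 with h | h
    · rw [min_eq_left h]
    · rw [min_eq_right h.le, h1, hJ.support a h]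
  refine ⟨K, K.2, fun a b ha hb => ?_⟩
  rw [key a ha, key b hb]
  have := hK.dist_le_mul (min a 1) ⟨le_min ha zero_le_one, min_le_right _ _⟩ (min b 1)
    ⟨le_min hb zero_le_one, min_le_right _ _⟩
  rw [Real.dist_eq, Real.dist_eq] at this
  refine this.trans ?_
  refine mul_le_mul_of_nonneg_left ?_ K.2
  have := abs_min_sub_min_le_max a 1 b 1
  rw [sub_self, abs_zero, max_eq_left (abs_nonneg _)] at this
  exact this

set_option linter.unusedSectionVars false

section aux
variable {d L k ℓ : ℕ} [Fact ((0:ℝ) < L)]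

lemma coord_mem (x : AddCircle (L:ℝ)) : 0 ≤ torusCoord x ∧ torusCoord x < L := by
  have := ((AddCircle.equivIco (L:ℝ) 0) x).2
  exact ⟨this.1, this.2.trans_eq (zero_add _)⟩

lemma coe_coord (x : AddCircle (L:ℝ)) : ((torusCoord x : ℝ) : AddCircle (L:ℝ)) = x :=
  AddCircle.coe_equivIco

lemma coord_coe (r : ℝ) (h0 : 0 ≤ r) (h1 : r < L) : torusCoord (r : AddCircle (L:ℝ)) = r :=
  AddCircle.equivIco_coe_of_mem (p := (L:ℝ)) (a := 0) ⟨h0, by simpa using h1⟩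

lemma siteOf_val (x : Torus d L) (i : Fin d) :
    (((siteOf L k x i : ℕ)) : ℤ) = ⌊torusCoord (x i) * 2 ^ k⌋ := by
  have h := coord_mem (x i)
  have h2 : (0:ℝ) < 2 ^ k := by positivity
  have h0 : 0 ≤ ⌊torusCoord (x i) * 2 ^ k⌋ := Int.floor_nonneg.2 (by nlinarith)
  have h1 : ⌊torusCoord (x i) * 2 ^ k⌋ < ((2 ^ k * L : ℕ) : ℤ) := by
    rw [Int.floor_lt]
    push_cast
    nlinarith
  obtain ⟨n, hn⟩ := Int.eq_ofNat_of_zero_le h0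
  simp only [siteOf]
  rw [hn] at h1 ⊢
  have : n < 2 ^ k * L := by exact_mod_cast h1
  simp [Nat.mod_eq_of_lt this]

lemma siteOf_iff (x : Torus d L) (p : Site d L k) :
    siteOf L k x = p ↔ ∀ i, torusCoord (x i) ∈
      Set.Ico (((p i : ℕ) : ℝ) * gam k) ((((p i : ℕ) : ℝ) + 1) * gam k) := by
  have hg : gam k = ((2:ℝ) ^ k)⁻¹ := by simp [gam]
  rw [funext_iff]
  refine forall_congr' fun i => ?_
  rw [Fin.ext_iff, ← Nat.cast_inj (R := ℤ), siteOf_val, Int.floor_eq_iff, hg, Set.mem_Ico,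
    mul_inv_le_iff₀ (by positivity), lt_mul_inv_iff₀ (by positivity)]
  simp

lemma gam_pos (k : ℕ) : 0 < gam k := by unfold gam; positivity

lemma measurable_coord : Measurable (torusCoord : AddCircle (L:ℝ) → ℝ) :=
  measurable_subtype_coe.comp (AddCircle.measurableEquivIco (L:ℝ) 0).measurable

lemma vol_coord (a b : ℝ) (ha : 0 ≤ a) (hb : b ≤ L) :
    volume ((torusCoord : AddCircle (L:ℝ) → ℝ) ⁻¹' Set.Ico a b) = ENNReal.ofReal (b - a) := by
  have hm : MeasurableSet ((torusCoord : AddCircle (L:ℝ) → ℝ) ⁻¹' Set.Ico a b) :=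
    measurable_coord measurableSet_Ico
  have hp := AddCircle.measurePreserving_mk (L:ℝ) 0
  rw [← hp.measure_preimage hm.nullMeasurableSet, zero_add, ← restrict_Ico_eq_restrict_Ioc,
    Measure.restrict_apply (hp.measurable hm), ← Real.volume_Ico]
  congr 1
  ext r
  simp only [Set.mem_inter_iff, Set.mem_preimage, Set.mem_Ico]
  constructor
  · rintro ⟨h, h0, h1⟩
    rwa [coord_coe r h0 h1] at h
  · rintro ⟨h0, h1⟩
    have h0' := ha.trans h0
    have h1' := h1.trans_le hb
    rw [coord_coe r h0' h1']
    exact ⟨⟨h0, h1⟩, h0', h1'⟩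

lemma site_le (p : Site d L k) (i : Fin d) : (((p i : ℕ) : ℝ) + 1) * gam k ≤ L := by
  have hg : gam k = ((2:ℝ) ^ k)⁻¹ := by simp [gam]
  rw [hg, mul_inv_le_iff₀ (by positivity)]
  have : (p i : ℕ) + 1 ≤ L * 2 ^ k := by
    have := (p i).2
    linarith
  exact_mod_cast this

lemma preimage_site (p : Site d L k) : (siteOf L k : Torus d L → Site d L k) ⁻¹' {p} =
    Set.pi Set.univ (fun i => (torusCoord : AddCircle (L:ℝ) → ℝ) ⁻¹'
      Set.Ico (((p i : ℕ) : ℝ) * gam k) ((((p i : ℕ) : ℝ) + 1) * gam k)) := by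
  ext x
  simp only [Set.mem_preimage, Set.mem_singleton_iff, siteOf_iff, Set.mem_pi, Set.mem_univ,
    true_implies]

lemma measurable_site : Measurable (siteOf L k : Torus d L → Site d L k) := by
  refine measurable_to_countable' fun p => ?_
  rw [preimage_site]
  exact MeasurableSet.univ_pi fun i => measurable_coord measurableSet_Ico

lemma vol_site (p : Site d L k) :
    volume ((siteOf L k : Torus d L → Site d L k) ⁻¹' {p}) = ENNReal.ofReal (gam k ^ d) := by
  rw [preimage_site, volume_pi_pi]
  have : ∀ i, volume ((torusCoord : AddCircle (L:ℝ) → ℝ) ⁻¹'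
      Set.Ico (((p i : ℕ) : ℝ) * gam k) ((((p i : ℕ) : ℝ) + 1) * gam k)) =
      ENNReal.ofReal (gam k) := by
    intro i
    rw [vol_coord _ _ (by have := gam_pos k; positivity) (site_le p i)]
    congr 1; ring
  simp only [this]
  rw [Finset.prod_const, ENNReal.ofReal_pow (gam_pos k).le]
  simp

lemma int_site (g : Site d L k → ℝ) :
    ∫ x : Torus d L, g (siteOf L k x) = gam k ^ d * ∑ p, g p := by
  have hm : AEMeasurable (siteOf L k : Torus d L → Site d L k) volume :=
    measurable_site.aemeasurable
  rw [← integral_map (f := g) hm (measurable_of_finite g).aestronglyMeasurable,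
    integral_fintype (.of_finite), Finset.mul_sum]
  refine Finset.sum_congr rfl fun p _ => ?_
  rw [measureReal_def, Measure.map_apply measurable_site (MeasurableSet.singleton p), vol_site,
    ENNReal.toReal_ofReal (by have := gam_pos k; positivity), smul_eq_mul]

lemma int_site_set (A : Site d L k → Prop) (g : Site d L k → ℝ) :
    ∫ x in {x : Torus d L | A (siteOf L k x)}, g (siteOf L k x) =
      gam k ^ d * ∑ p with A p, g p := by
  have hm : MeasurableSet {x : Torus d L | A (siteOf L k x)} :=
    measurable_site (Set.toFinite {p | A p}).measurableSet
  rw [← integral_indicator hm, Finset.sum_filter, ← int_site]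
  rfl

lemma vol_site_set (A : Site d L k → Prop) :
    (volume {x : Torus d L | A (siteOf L k x)}).toReal =
      gam k ^ d * (Finset.univ.filter A).card := by
  have := int_site_set A (fun _ => 1)
  simpa [measureReal_def] using this

/-- the coarse block of a fine site -/
def blk (h : ℓ ≤ k) (p : Site d L k) : Site d L ℓ := fun i =>
  ⟨(p i : ℕ) / 2 ^ (k - ℓ), by
    rw [Nat.div_lt_iff_lt_mul (by positivity)]
    calc (p i : ℕ) < 2 ^ k * L := (p i).2
      _ = 2 ^ ℓ * L * 2 ^ (k - ℓ) := by
        rw [mul_right_comm, ← pow_add, Nat.add_sub_cancel' h]⟩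

lemma blk_siteOf (h : ℓ ≤ k) (x : Torus d L) : blk h (siteOf L k x) = siteOf L ℓ x := by
  ext i
  rw [← Nat.cast_inj (R := ℤ), siteOf_val]
  symm
  have h1 := siteOf_val (k := k) x i
  symm at h1
  rw [Int.floor_eq_iff] at h1 ⊢
  simp only [blk]
  set a : ℕ := (siteOf L k x i : ℕ)
  have hD : (2:ℝ) ^ k = 2 ^ ℓ * 2 ^ (k - ℓ) := by rw [← pow_add, Nat.add_sub_cancel' h]
  rw [hD] at h1
  have hp : (0:ℝ) < 2 ^ (k - ℓ) := by positivity
  have e1 : a / 2 ^ (k - ℓ) * 2 ^ (k - ℓ) ≤ a := Nat.div_mul_le_self _ _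
  have e2 : a + 1 ≤ (a / 2 ^ (k - ℓ) + 1) * 2 ^ (k - ℓ) := by
    have := Nat.lt_div_mul_add (a := a) (b := 2 ^ (k - ℓ)) (by positivity)
    rw [add_mul]; omega
  generalize a / 2 ^ (k - ℓ) = q at *
  have e1' : (q:ℝ) * 2 ^ (k - ℓ) ≤ a := by exact_mod_cast e1
  have e2' : (a:ℝ) + 1 ≤ (q + 1) * 2 ^ (k - ℓ) := by exact_mod_cast e2
  push_cast at h1 ⊢
  constructor
  · exact le_of_mul_le_mul_right (by linarith [h1.1]) hp
  · exact lt_of_mul_lt_mul_right (by linarith [h1.2]) hp.le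

lemma siteOf_sitePos (p : Site d L k) : siteOf L k (sitePos L k p) = p := by
  rw [siteOf_iff]
  intro i
  have h := site_le p i
  have hg := gam_pos k
  simp only [sitePos]
  rw [coord_coe]
  · exact ⟨le_refl _, by unfold gam at *; linarith⟩
  · positivity
  · unfold gam at *; linarith

lemma dist_corner (x : Torus d L) (i : Fin d) :
    dist (x i) (sitePos L ℓ (siteOf L ℓ x) i) ≤ gam ℓ := by
  have h := (siteOf_iff x _).1 (rfl : siteOf L ℓ x = siteOf L ℓ x) i
  conv_lhs => rw [← coe_coord (x i)]
  unfold sitePos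
  rw [dist_eq_norm, ← AddCircle.coe_sub]
  refine (QuotientAddGroup.norm_mk_le_norm).trans ?_
  rw [Real.norm_eq_abs]
  unfold gam at *
  rw [abs_le]
  constructor <;> [skip; skip] <;> nlinarith [h.1, h.2, gam_pos ℓ, show (0:ℝ) < (2:ℝ) ^ (-(ℓ:ℤ)) by positivity]

lemma torusDist_eq (x y : Torus d L) :
    torusDist x y = dist (WithLp.toLp 2 x : PiLp 2 (fun _ : Fin d => AddCircle (L:ℝ)))
      (WithLp.toLp 2 y) := by
  rw [PiLp.dist_eq_of_L2]; rfl

lemma torusDist_diff (x y x' y' : Torus d L) :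
    |torusDist x y - torusDist x' y'| ≤ torusDist x x' + torusDist y y' := by
  simp only [torusDist_eq]
  exact dist_dist_dist_le _ _ _ _

lemma torusDist_nonneg (x y : Torus d L) : 0 ≤ torusDist x y := Real.sqrt_nonneg _

lemma dist_le_torusDist (x y : Torus d L) : dist x y ≤ torusDist x y := by
  rw [dist_pi_le_iff (torusDist_nonneg _ _)]
  intro i
  refine Real.le_sqrt_of_sq_le ?_
  exact Finset.single_le_sum (f := fun i => dist (x i) (y i) ^ 2)
    (fun i _ => sq_nonneg _) (Finset.mem_univ i)

lemma torusDist_corner (x : Torus d L) :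
    torusDist x (sitePos L ℓ (siteOf L ℓ x)) ≤ √d * gam ℓ := by
  unfold torusDist
  have : ∑ i, (dist (x i) (sitePos L ℓ (siteOf L ℓ x) i)) ^ 2 ≤ d * gam ℓ ^ 2 := by
    calc _ ≤ ∑ i : Fin d, gam ℓ ^ 2 :=
          Finset.sum_le_sum fun i _ => pow_le_pow_left₀ dist_nonneg (dist_corner x i) 2
      _ = _ := by simp
  refine (Real.sqrt_le_sqrt this).trans ?_
  rw [Real.sqrt_mul (by positivity), Real.sqrt_sq (gam_pos ℓ).le]

lemma gam_le_one (n : ℕ) : gam n ≤ 1 := by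
  have hg : gam n = ((2:ℝ) ^ n)⁻¹ := by simp [gam]
  rw [hg]
  exact inv_le_one_of_one_le₀ (one_le_pow₀ (by norm_num))

/-- coarse potential -/
noncomputable def JB (J : ℝ → ℝ) (a b : Site d L ℓ) : ℝ :=
  J (torusDist (sitePos L ℓ a) (sitePos L ℓ b))

/-- error weight -/
noncomputable def WB (Λ : ℝ) (a b : Site d L ℓ) : ℝ :=
  if torusDist (sitePos L ℓ a) (sitePos L ℓ b) ≤ 1 + 2 * √d then 2 * Λ * √d * gam ℓ else 0

lemma J_diff (J : ℝ → ℝ) (Λ : ℝ) (hΛ : 0 ≤ Λ) (hs : ∀ r, 1 < r → J r = 0)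
    (hL : ∀ a b : ℝ, 0 ≤ a → 0 ≤ b → |J a - J b| ≤ Λ * |a - b|) (x y : Torus d L) :
    |J (torusDist x y) - JB J (siteOf L ℓ x) (siteOf L ℓ y)| ≤
      WB Λ (siteOf L ℓ x) (siteOf L ℓ y) := by
  unfold JB WB
  have h1 := torusDist_diff x y (sitePos L ℓ (siteOf L ℓ x)) (sitePos L ℓ (siteOf L ℓ y))
  have h2 := torusDist_corner (ℓ := ℓ) x
  have h3 := torusDist_corner (ℓ := ℓ) y
  have h4 := hL _ _ (torusDist_nonneg x y)
    (torusDist_nonneg (sitePos L ℓ (siteOf L ℓ x)) (sitePos L ℓ (siteOf L ℓ y)))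
  split_ifs with h
  · refine h4.trans ?_
    calc _ ≤ Λ * (2 * (√d * gam ℓ)) := by gcongr; linarith
      _ = _ := by ring
  · push Not at h
    have h5 : √d * gam ℓ ≤ √d := mul_le_of_le_one_right (Real.sqrt_nonneg _) (gam_le_one ℓ)
    have h6 := (abs_le.1 h1).1
    rw [hs _ (by linarith), hs _ (by linarith [Real.sqrt_nonneg (d:ℝ)])]
    simp

lemma WB_sum (h : ℓ ≤ k) (Λ : ℝ) (hΛ : 0 ≤ Λ) (a : Site d L ℓ) :
    gam k ^ d * ∑ q : Site d L k, WB Λ a (blk h q) ≤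
      2 * Λ * √d * gam ℓ * (4 + 4 * √d) ^ d := by
  have hg := gam_pos ℓ
  have e : ∑ q : Site d L k, WB Λ a (blk h q) = 2 * Λ * √d * gam ℓ *
      (Finset.univ.filter (fun q : Site d L k =>
        torusDist (sitePos L ℓ a) (sitePos L ℓ (blk h q)) ≤ 1 + 2 * √d)).card := by
    unfold WB
    rw [← Finset.sum_filter, Finset.sum_const, nsmul_eq_mul, mul_comm]
  rw [e, mul_left_comm, ← vol_site_set]
  gcongr
  have hr : 0 ≤ 2 + 2 * √(d:ℝ) := by positivity
  have hb : volume (Metric.closedBall (sitePos L ℓ a) (2 + 2 * √d)) ≤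
      ENNReal.ofReal ((4 + 4 * √d) ^ d) := by
    rw [MeasureTheory.volume_pi_closedBall _ hr]
    calc _ ≤ ∏ i : Fin d, ENNReal.ofReal (4 + 4 * √d) := by
          refine Finset.prod_le_prod' fun i _ => ?_
          rw [AddCircle.volume_closedBall]
          refine ENNReal.ofReal_le_ofReal ((min_le_right _ _).trans ?_)
          linarith
      _ = _ := by
          rw [Finset.prod_const, ENNReal.ofReal_pow (by positivity)]; simp
  refine ENNReal.toReal_le_of_le_ofReal (by positivity) (le_trans (measure_mono ?_) hb)
  intro x hx
  simp only [Set.mem_ofPred_eq, blk_siteOf] at hx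
  rw [Metric.mem_closedBall]
  have h1 : dist x (sitePos L ℓ (siteOf L ℓ x)) ≤ 1 := by
    rw [dist_pi_le_iff zero_le_one]
    exact fun i => (dist_corner x i).trans (gam_le_one ℓ)
  have h2 := (dist_le_torusDist _ _).trans hx
  have h3 := dist_triangle x (sitePos L ℓ (siteOf L ℓ x)) (sitePos L ℓ a)
  rw [dist_comm (sitePos L ℓ (siteOf L ℓ x))] at h3
  linarith

lemma card_gam : gam k ^ d * (Fintype.card (Site d L k) : ℝ) = (L:ℝ) ^ d := by
  have hg : gam k = ((2:ℝ) ^ k)⁻¹ := by simp [gam]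
  simp only [Fintype.card_fun, Fintype.card_fin]
  push_cast
  rw [← mul_pow, hg]
  congr 1
  field_simp

lemma WB_sum2 (h : ℓ ≤ k) (Λ : ℝ) (hΛ : 0 ≤ Λ) :
    gam k ^ d * ∑ p : Site d L k, gam k ^ d * ∑ q : Site d L k, WB Λ (blk h p) (blk h q) ≤
      2 * Λ * √d * gam ℓ * (4 + 4 * √d) ^ d * (L:ℝ) ^ d := by
  have hg := gam_pos k
  calc _ ≤ gam k ^ d * ∑ p : Site d L k, 2 * Λ * √d * gam ℓ * (4 + 4 * √d) ^ d := by
        refine mul_le_mul_of_nonneg_left (Finset.sum_le_sum fun p _ => ?_) (by positivity)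
        exact WB_sum h Λ hΛ (blk h p)
    _ = _ := by
        rw [Finset.sum_const, nsmul_eq_mul, Finset.card_univ, ← card_gam (k := k)]
        ring


/-- size of a block -/
noncomputable def bn (h : ℓ ≤ k) (b : Site d L ℓ) : ℕ :=
  (Finset.univ.filter (fun p : Site d L k => blk h p = b)).card

/-- number of plus spins in a block -/
noncomputable def bt (h : ℓ ≤ k) (s : ConfigSpace d L k) (b : Site d L ℓ) : ℕ :=
  (Finset.univ.filter (fun p : Site d L k => blk h p = b ∧ s p = true)).card

/-- block average -/
noncomputable def avg (h : ℓ ≤ k) (s : ConfigSpace d L k) (b : Site d L ℓ) : ℝ :=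
  (2 * (bt h s b : ℝ) - bn h b) / bn h b

lemma spin_sum (h : ℓ ≤ k) (s : ConfigSpace d L k) (b : Site d L ℓ) :
    ∑ p with blk h p = b, spin (s p) = 2 * (bt h s b : ℝ) - bn h b := by
  have e : ∀ p : Site d L k, spin (s p) = 2 * (if s p = true then 1 else 0) - 1 := by
    intro p
    unfold spin
    split_ifs <;> norm_num
  simp only [e]
  rw [Finset.sum_sub_distrib, ← Finset.mul_sum, ← Finset.sum_filter, Finset.filter_filter]
  simp [bt, bn]

lemma bt_le (h : ℓ ≤ k) (s : ConfigSpace d L k) (b : Site d L ℓ) : bt h s b ≤ bn h b := by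
  refine Finset.card_le_card fun p hp => ?_
  simp only [Finset.mem_filter, Finset.mem_univ, true_and] at hp ⊢
  exact hp.1

lemma avg_mul (h : ℓ ≤ k) (s : ConfigSpace d L k) (b : Site d L ℓ) :
    (bn h b : ℝ) * avg h s b = 2 * (bt h s b : ℝ) - bn h b := by
  unfold avg
  by_cases h0 : bn h b = 0
  · have := bt_le h s b
    have h1 : bt h s b = 0 := by omega
    simp [h0, h1]
  · have : (bn h b : ℝ) ≠ 0 := by exact_mod_cast h0
    field_simp

lemma abs_avg_le (h : ℓ ≤ k) (s : ConfigSpace d L k) (b : Site d L ℓ) : |avg h s b| ≤ 1 := by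
  unfold avg
  rw [abs_div, Nat.abs_cast]
  refine div_le_one_of_le₀ ?_ (Nat.cast_nonneg _)
  have h1 : (bt h s b : ℝ) ≤ bn h b := by exact_mod_cast bt_le h s b
  have h0 : (0:ℝ) ≤ bt h s b := Nat.cast_nonneg _
  rw [abs_le]
  constructor <;> linarith

lemma cubeIdx_eq (x y : Torus d L) : cubeIdx L ℓ y = cubeIdx L ℓ x ↔
    siteOf L ℓ y = siteOf L ℓ x := by
  rw [funext_iff, funext_iff]
  refine forall_congr' fun i => ?_
  rw [Fin.ext_iff, ← Nat.cast_inj (R := ℤ), siteOf_val, siteOf_val]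
  rfl

lemma coarse_eq (h : ℓ ≤ k) (s : ConfigSpace d L k) (x : Torus d L) :
    coarse L ℓ (stepFun L k s) x = avg h s (siteOf L ℓ x) := by
  have hc : cubeOf L ℓ x = {y : Torus d L | (fun p => blk h p = siteOf L ℓ x) (siteOf L k y)} := by
    ext y
    simp only [cubeOf, Set.mem_ofPred_eq, cubeIdx_eq, blk_siteOf]
  unfold coarse stepFun
  rw [hc, int_site_set (fun p => blk h p = siteOf L ℓ x) (fun p => spin (s p)),
    vol_site_set (fun p => blk h p = siteOf L ℓ x), avg]
  have := gam_pos k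
  rw [mul_div_mul_left _ _ (by positivity), ← spin_sum, bn]
  congr!

lemma coarse_iff (h : ℓ ≤ k) (s s₀ : ConfigSpace d L k) :
    coarse L ℓ (stepFun L k s) = coarse L ℓ (stepFun L k s₀) ↔ ∀ b, bt h s b = bt h s₀ b := by
  constructor
  · intro H b
    have := congrFun H (sitePos L ℓ b)
    rw [coarse_eq h, coarse_eq h, siteOf_sitePos] at this
    have h1 := avg_mul h s b
    have h2 := avg_mul h s₀ b
    rw [this, h2] at h1
    have : (bt h s b : ℝ) = bt h s₀ b := by linarith
    exact_mod_cast this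
  · intro H
    funext x
    rw [coarse_eq h, coarse_eq h, avg, avg, H]

lemma sum_block (h : ℓ ≤ k) (g : Site d L ℓ → ℝ) :
    ∑ p : Site d L k, g (blk h p) = ∑ b, (bn h b : ℝ) * g b := by
  rw [← Finset.sum_fiberwise Finset.univ (blk h)]
  refine Finset.sum_congr rfl fun b _ => ?_
  rw [Finset.sum_congr rfl (g := fun _ => g b) (by simp +contextual)]
  simp [bn]

lemma sum_avg (h : ℓ ≤ k) (g : Site d L ℓ → ℝ) (s : ConfigSpace d L k) :
    ∑ p : Site d L k, g (blk h p) * spin (s p) =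
      ∑ p : Site d L k, g (blk h p) * avg h s (blk h p) := by
  rw [sum_block h (fun b => g b * avg h s b), ← Finset.sum_fiberwise Finset.univ (blk h)]
  refine Finset.sum_congr rfl fun b _ => ?_
  rw [Finset.sum_congr rfl (g := fun p => g b * spin (s p)) (by simp +contextual),
    ← Finset.mul_sum, spin_sum, ← avg_mul]
  ring

lemma sum_avg2 (h : ℓ ≤ k) (g : Site d L ℓ → Site d L ℓ → ℝ) (s : ConfigSpace d L k) :
    ∑ p : Site d L k, ∑ q : Site d L k, g (blk h p) (blk h q) * spin (s p) * spin (s q) =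
    ∑ p : Site d L k, ∑ q : Site d L k,
      g (blk h p) (blk h q) * avg h s (blk h p) * avg h s (blk h q) := by
  have e1 : ∀ p : Site d L k, ∑ q : Site d L k, g (blk h p) (blk h q) * spin (s p) * spin (s q) =
      (∑ q : Site d L k, g (blk h p) (blk h q) * avg h s (blk h q)) * spin (s p) := by
    intro p
    rw [← sum_avg h (fun b => g (blk h p) b), Finset.sum_mul]
    exact Finset.sum_congr rfl fun q _ => by ring
  simp only [e1]
  rw [sum_avg h (fun a => ∑ q : Site d L k, g a (blk h q) * avg h s (blk h q))]
  refine Finset.sum_congr rfl fun p _ => ?_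
  rw [Finset.sum_mul]
  exact Finset.sum_congr rfl fun q _ => by ring

lemma bn_le (h : ℓ ≤ k) (b : Site d L ℓ) : bn h b ≤ (2 ^ (k - ℓ)) ^ d := by
  have : (2 ^ (k - ℓ)) ^ d = (Finset.univ : Finset (Fin d → Fin (2 ^ (k - ℓ)))).card := by simp
  rw [this]
  refine Finset.card_le_card_of_injOn
    (fun p i => ⟨(p i : ℕ) % 2 ^ (k - ℓ), Nat.mod_lt _ (by positivity)⟩) (by simp) ?_
  intro p hp q hq hpq
  simp only [Finset.coe_filter, Finset.mem_univ, true_and, Set.mem_ofPred_eq] at hp hq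
  ext i
  have h1 := congrArg Fin.val (congrFun (hp.trans hq.symm) i)
  have h2 := congrArg Fin.val (congrFun hpq i)
  simp only [blk] at h1 h2
  rw [← Nat.div_add_mod (p i : ℕ) (2 ^ (k - ℓ)), h1, h2, Nat.div_add_mod]

lemma spin_abs (b : Bool) : |spin b| = 1 := by
  unfold spin; split_ifs <;> simp

lemma disc_diff (h : ℓ ≤ k) (J : ℝ → ℝ) (Λ : ℝ) (hΛ : 0 ≤ Λ) (hs : ∀ r, 1 < r → J r = 0)
    (hL : ∀ a b : ℝ, 0 ≤ a → 0 ≤ b → |J a - J b| ≤ Λ * |a - b|) (s : ConfigSpace d L k) :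
    |∑ p : Site d L k, ∑ q : Site d L k,
        J (torusDist (sitePos L k p) (sitePos L k q)) * spin (s p) * spin (s q) -
      ∑ p : Site d L k, ∑ q : Site d L k,
        JB J (blk h p) (blk h q) * avg h s (blk h p) * avg h s (blk h q)| ≤
    ∑ p : Site d L k, ∑ q : Site d L k, WB Λ (blk h p) (blk h q) := by
  rw [← sum_avg2, ← Finset.sum_sub_distrib]
  refine (Finset.abs_sum_le_sum_abs _ _).trans (Finset.sum_le_sum fun p _ => ?_)
  rw [← Finset.sum_sub_distrib]
  refine (Finset.abs_sum_le_sum_abs _ _).trans (Finset.sum_le_sum fun q _ => ?_)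
  rw [← sub_mul, ← sub_mul, abs_mul, abs_mul, spin_abs, spin_abs, mul_one, mul_one]
  have := J_diff (ℓ := ℓ) J Λ hΛ hs hL (sitePos L k p) (sitePos L k q)
  rwa [← blk_siteOf h, ← blk_siteOf h, siteOf_sitePos, siteOf_sitePos] at this

lemma int_site2 (g : Site d L k → Site d L k → ℝ) :
    ∫ x : Torus d L, ∫ y : Torus d L, g (siteOf L k x) (siteOf L k y) =
      gam k ^ d * ∑ p, gam k ^ d * ∑ q, g p q := by
  have : ∀ x : Torus d L, ∫ y : Torus d L, g (siteOf L k x) (siteOf L k y) =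
      gam k ^ d * ∑ q, g (siteOf L k x) q := fun x => int_site _
  simp only [this]
  exact int_site (fun p => gam k ^ d * ∑ q, g p q)

lemma meas_site2 (g : Site d L k → Site d L k → ℝ) :
    Measurable (fun z : Torus d L × Torus d L => g (siteOf L k z.1) (siteOf L k z.2)) := by
  have h1 : Measurable (fun z : Torus d L × Torus d L => (siteOf L k z.1, siteOf L k z.2)) :=
    (measurable_site.comp measurable_fst).prodMk (measurable_site.comp measurable_snd)
  exact (measurable_of_finite (fun a : Site d L k × Site d L k => g a.1 a.2)).comp h1

lemma integrable_site2 (g : Site d L k → Site d L k → ℝ) :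
    Integrable (fun z : Torus d L × Torus d L => g (siteOf L k z.1) (siteOf L k z.2))
      (volume.prod volume) := by
  refine Integrable.of_bound (meas_site2 g).aestronglyMeasurable
    (∑ p, ∑ q, |g p q|) (Filter.Eventually.of_forall fun z => ?_)
  rw [Real.norm_eq_abs]
  calc |g (siteOf L k z.1) (siteOf L k z.2)| ≤ ∑ q, |g (siteOf L k z.1) q| :=
        Finset.single_le_sum (f := fun q => |g (siteOf L k z.1) q|)
          (fun _ _ => abs_nonneg _) (Finset.mem_univ _)
    _ ≤ _ := Finset.single_le_sum (f := fun p => ∑ q, |g p q|)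
          (fun _ _ => Finset.sum_nonneg fun _ _ => abs_nonneg _) (Finset.mem_univ _)

lemma cont_torusDist : Continuous (fun z : Torus d L × Torus d L => torusDist z.1 z.2) := by
  unfold torusDist
  fun_prop

lemma int_diff (h : ℓ ≤ k) (J : ℝ → ℝ) (hc : Continuous J) (M : ℝ) (hM : ∀ r, |J r| ≤ M)
    (Λ : ℝ) (hΛ : 0 ≤ Λ) (hs : ∀ r, 1 < r → J r = 0)
    (hL : ∀ a b : ℝ, 0 ≤ a → 0 ≤ b → |J a - J b| ≤ Λ * |a - b|) (s : ConfigSpace d L k) :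
    |(∫ x : Torus d L, ∫ y : Torus d L, J (torusDist x y) *
        coarse L ℓ (stepFun L k s) x * coarse L ℓ (stepFun L k s) y) -
      gam k ^ d * ∑ p : Site d L k, gam k ^ d * ∑ q : Site d L k,
        JB J (blk h p) (blk h q) * avg h s (blk h p) * avg h s (blk h q)| ≤
    gam k ^ d * ∑ p : Site d L k, gam k ^ d *
      ∑ q : Site d L k, WB Λ (blk h p) (blk h q) := by
  have M0 : 0 ≤ M := (abs_nonneg _).trans (hM 0)
  simp only [coarse_eq h]
  rw [← int_site2 (fun p q : Site d L k =>
      JB J (blk h p) (blk h q) * avg h s (blk h p) * avg h s (blk h q)),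
    ← int_site2 (fun p q : Site d L k => WB Λ (blk h p) (blk h q))]
  simp only [blk_siteOf]
  have i1 : Integrable (fun z : Torus d L × Torus d L => J (torusDist z.1 z.2) *
      avg h s (siteOf L ℓ z.1) * avg h s (siteOf L ℓ z.2)) (volume.prod volume) := by
    refine Integrable.of_bound (C := M) ?_ (Filter.Eventually.of_forall fun z => ?_)
    · have m1 : Measurable (fun z : Torus d L × Torus d L => J (torusDist z.1 z.2)) :=
        (hc.comp cont_torusDist).measurable
      have m2 := meas_site2 (d := d) (L := L) (k := ℓ) (fun a _ => avg h s a)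
      have m3 := meas_site2 (d := d) (L := L) (k := ℓ) (fun _ b => avg h s b)
      exact ((m1.mul m2).mul m3).aestronglyMeasurable
    · rw [Real.norm_eq_abs, abs_mul, abs_mul]
      calc _ ≤ M * 1 * 1 := by
            gcongr
            · exact hM _
            · exact abs_avg_le _ _ _
            · exact abs_avg_le _ _ _
        _ = M := by ring
  have i2 := integrable_site2 (d := d) (L := L) (k := ℓ)
    (fun a b => JB J a b * avg h s a * avg h s b)
  have i3 := integrable_site2 (d := d) (L := L) (k := ℓ) (fun a b => WB Λ a b)
  rw [integral_integral (f := fun x y => J (torusDist x y) *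
      avg h s (siteOf L ℓ x) * avg h s (siteOf L ℓ y)) i1,
    integral_integral (f := fun x y => JB J (siteOf L ℓ x) (siteOf L ℓ y) *
      avg h s (siteOf L ℓ x) * avg h s (siteOf L ℓ y)) i2,
    integral_integral (f := fun x y => WB Λ (siteOf L ℓ x) (siteOf L ℓ y)) i3,
    ← integral_sub i1 i2]
  refine (abs_integral_le_integral_abs).trans (integral_mono (i1.sub i2).abs i3 fun z => ?_)
  dsimp only
  rw [← sub_mul, ← sub_mul, abs_mul, abs_mul]
  have := J_diff (ℓ := ℓ) J Λ hΛ hs hL z.1 z.2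
  calc _ ≤ |J (torusDist z.1 z.2) - JB J (siteOf L ℓ z.1) (siteOf L ℓ z.2)| * 1 * 1 := by
        gcongr
        · exact abs_avg_le _ _ _
        · exact abs_avg_le _ _ _
    _ ≤ _ := by linarith

lemma log_sum_bound {S : Type*} (E : Finset S) (hE : E.Nonempty) (f : S → ℝ) (c D : ℝ)
    (hf : ∀ s ∈ E, |f s - c| ≤ D) :
    |Real.log (∑ s ∈ E, Real.exp (f s)) - (Real.log E.card + c)| ≤ D := by
  have hc : (0:ℝ) < E.card := by exact_mod_cast hE.card_pos
  have hpos : 0 < ∑ s ∈ E, Real.exp (f s) := Finset.sum_pos (fun _ _ => Real.exp_pos _) hE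
  have h1 : ∑ s ∈ E, Real.exp (f s) ≤ E.card * Real.exp (c + D) := by
    calc _ ≤ ∑ s ∈ E, Real.exp (c + D) :=
          Finset.sum_le_sum fun s hs => Real.exp_le_exp.2 (by linarith [(abs_le.1 (hf s hs)).2])
      _ = _ := by simp
  have h2 : E.card * Real.exp (c - D) ≤ ∑ s ∈ E, Real.exp (f s) := by
    calc _ = ∑ s ∈ E, Real.exp (c - D) := by simp
      _ ≤ _ := 
          Finset.sum_le_sum fun s hs => Real.exp_le_exp.2 (by linarith [(abs_le.1 (hf s hs)).1])
  have g1 := Real.log_le_log hpos h1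
  have g2 := Real.log_le_log (by positivity) h2
  rw [Real.log_mul hc.ne' (Real.exp_pos _).ne', Real.log_exp] at g1 g2
  rw [abs_le]
  constructor <;> linarith

lemma entropy_bound (hk : 1 ≤ k) (h : ℓ ≤ k) (s₀ : ConfigSpace d L k) :
    |Real.log ((Finset.univ.filter (fun s : ConfigSpace d L k =>
            coarse L ℓ (stepFun L k s) = coarse L ℓ (stepFun L k s₀))).card : ℝ) +
      ((2:ℝ) ^ k) ^ d * (∫ x : Torus d L, ient (coarse L ℓ (stepFun L k s₀) x))| ≤
    3 * (d + 3) * ((((2:ℝ) ^ ℓ * L) ^ d) * (k * Real.log 2)) := by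
  have hcard : (Finset.univ.filter (fun s : ConfigSpace d L k =>
            coarse L ℓ (stepFun L k s) = coarse L ℓ (stepFun L k s₀))).card =
      ∏ b : Site d L ℓ, (bn h b).choose (bt h s₀ b) := by
    have := aux_count (blk (d := d) (L := L) h) (bt h s₀)
    simp only [coarse_iff h]
    refine Eq.trans ?_ (this.trans ?_)
    · congr 1
      ext s
      simp only [Finset.mem_filter, Finset.mem_univ, true_and]
      refine forall_congr' fun b => ?_
      have e : bt h s b = (Finset.univ.filter (fun p => blk h p = b ∧ s p = true)).card := by
        unfold bt
        congr!
      rw [e]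
      congr!
    · simp only [bn]
      congr!
  have hientsum : ((2:ℝ) ^ k) ^ d * (∫ x : Torus d L, ient (coarse L ℓ (stepFun L k s₀) x)) =
      ∑ b, (bn h b : ℝ) * ient (avg h s₀ b) := by
    simp only [coarse_eq h, ← blk_siteOf h]
    rw [int_site (fun p => ient (avg h s₀ (blk h p))), sum_block h (fun b => ient (avg h s₀ b)),
      ← mul_assoc, ← mul_pow]
    simp [gam]
  have hne : ∀ b ∈ (Finset.univ : Finset (Site d L ℓ)),
      ((bn h b).choose (bt h s₀ b) : ℝ) ≠ 0 := by
    intro b _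
    have := Nat.choose_pos (bt_le h s₀ b)
    positivity
  rw [hcard, hientsum, Nat.cast_prod, Real.log_prod hne, ← Finset.sum_add_distrib]
  refine (Finset.abs_sum_le_sum_abs _ _).trans ?_
  have l2 : 1 / 2 < Real.log 2 := by linarith [Real.log_two_gt_d9]
  have hb : ∀ b : Site d L ℓ, |Real.log ((bn h b).choose (bt h s₀ b)) +
      (bn h b : ℝ) * ient (avg h s₀ b)| ≤ 3 * (d + 3) * (k * Real.log 2) := by
    intro b
    refine (aux_choose _ _ (bt_le h s₀ b)).trans ?_
    have h1 : (bn h b : ℝ) + 1 ≤ 2 ^ (k * d + 1) := by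
      have h2 : bn h b ≤ 2 ^ (k * d) := by
        refine (bn_le h b).trans ?_
        rw [← pow_mul]
        exact Nat.pow_le_pow_right (by norm_num) (Nat.mul_le_mul_right _ (Nat.sub_le _ _))
      have h3 : bn h b + 1 ≤ 2 ^ (k * d + 1) := by
        have := Nat.one_le_two_pow (n := k * d)
        rw [pow_succ]; omega
      exact_mod_cast h3
    have h2 := Real.log_le_log (by positivity) h1
    rw [Real.log_pow] at h2
    push_cast at h2
    have hk' : (1:ℝ) ≤ k := by exact_mod_cast hk
    have : 1 + Real.log ((bn h b : ℝ) + 1) ≤ (k * d + 3) * Real.log 2 := by linarith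
    have h4 : ((k:ℝ) * d + 3) * Real.log 2 ≤ (d + 3) * k * Real.log 2 := by
      gcongr; nlinarith
    linarith
  refine (Finset.sum_le_sum fun b _ => hb b).trans_eq ?_
  rw [Finset.sum_const, nsmul_eq_mul, Finset.card_univ]
  simp only [Fintype.card_fun, Fintype.card_fin]
  push_cast
  ring

lemma energy_bound (h : ℓ ≤ k) (β : ℝ) (hβ : 0 < β) (J : ℝ → ℝ) (hc : Continuous J)
    (M : ℝ) (hM : ∀ r, |J r| ≤ M)
    (Λ : ℝ) (hΛ : 0 ≤ Λ) (hs : ∀ r, 1 < r → J r = 0)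
    (hL : ∀ a b : ℝ, 0 ≤ a → 0 ≤ b → |J a - J b| ≤ Λ * |a - b|) (s₀ s : ConfigSpace d L k)
    (hss : coarse L ℓ (stepFun L k s) = coarse L ℓ (stepFun L k s₀)) :
    |-β * Ham L k J s - β * ((2:ℝ) ^ k) ^ d / 2 *
      (∫ x : Torus d L, ∫ y : Torus d L, J (torusDist x y) *
        coarse L ℓ (stepFun L k s₀) x * coarse L ℓ (stepFun L k s₀) y)| ≤
    β * (2 * Λ * √d * (4 + 4 * √d) ^ d) * (((2:ℝ) ^ k) ^ d * (L:ℝ) ^ d * gam ℓ) := by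
  rw [← hss]
  have a1 := int_diff h J hc M hM Λ hΛ hs hL s
  have a2 := disc_diff h J Λ hΛ hs hL s
  have a3 := WB_sum2 (d := d) (L := L) h Λ hΛ
  unfold Ham
  generalize (∫ x : Torus d L, ∫ y : Torus d L, J (torusDist x y) *
        coarse L ℓ (stepFun L k s) x * coarse L ℓ (stepFun L k s) y) = I at *
  simp only [← Finset.mul_sum] at a1 a3
  generalize (∑ p : Site d L k, ∑ q : Site d L k,
        JB J (blk h p) (blk h q) * avg h s (blk h p) * avg h s (blk h q)) = Y at *
  generalize (∑ p : Site d L k, ∑ q : Site d L k,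
        J (torusDist (sitePos L k p) (sitePos L k q)) * spin (s p) * spin (s q)) = X at *
  generalize (∑ p : Site d L k, ∑ q : Site d L k, WB Λ (blk h p) (blk h q)) = V at *
  have hgG : gam k ^ d * ((2:ℝ) ^ k) ^ d = 1 := by
    rw [← mul_pow]; simp [gam]
  have hg : 0 < gam k ^ d := pow_pos (gam_pos k) d
  have hG : 0 < ((2:ℝ) ^ k) ^ d := by positivity
  generalize gam k ^ d = g at *
  generalize ((2:ℝ) ^ k) ^ d = G at *
  have e : -β * (-(g / 2) * X) - β * G / 2 * I =
      β * G / 2 * (g * (g * (X - Y)) + -(I - g * (g * Y))) := by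
    have : β * G / 2 * (g * (g * (X - Y)) + -(I - g * (g * Y))) =
      β / 2 * (g * G) * g * X - β * G / 2 * I := by ring
    rw [this, hgG]; ring
  rw [e, abs_mul, abs_of_pos (by positivity)]
  have b1 : |g * (g * (X - Y))| ≤ g * (g * V) := by
    rw [abs_mul, abs_mul, abs_of_pos hg]
    gcongr
  have b2 := abs_add_le (g * (g * (X - Y))) (-(I - g * (g * Y)))
  rw [abs_neg] at b2
  calc _ ≤ β * G / 2 * (2 * (2 * Λ * √d * gam ℓ * (4 + 4 * √d) ^ d * (L:ℝ) ^ d)) := by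
        gcongr
        linarith
    _ = _ := by ring

end aux

/-- **The constrained partition sum over a coarse-grained fiber**: there is a constant `c > 0`,
depending only on `d`, `β` and `J`, such that for every coarse-grained configuration
`σ_δ = π^{(δ)}(s₀)`,
`| log ( Σ_{s ∈ E(σ_δ)} e^{−βH(s)} ) + β γ^{−d} F(σ_δ) | ≤
  c γ^{−d} L^d (γ^δ + γ^{d(1−δ)} log(1/γ))`, where `γ = 2^{−k}` and `δ = ℓ/k`. -/
theorem log_fiber_partition_sum (d : ℕ) (hd : 1 ≤ d) (β : ℝ) (hβ : 0 < β)
    (J : ℝ → ℝ) (hJ : KacPotential d J) :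
    ∃ c : ℝ, 0 < c ∧
      ∀ (L k ℓ : ℕ) [Fact ((0:ℝ) < L)], 2 ≤ L → 1 ≤ ℓ → ℓ < k →
      ∀ s₀ : ConfigSpace d L k,
      |Real.log (∑ s ∈ Finset.univ.filter (fun s : ConfigSpace d L k =>
            coarse L ℓ (stepFun L k s) = coarse L ℓ (stepFun L k s₀)),
            Real.exp (-β * Ham L k J s))
          + β * ((2:ℝ) ^ k) ^ d * GPL d L β J (coarse L ℓ (stepFun L k s₀))|
        ≤ c * ((2:ℝ) ^ k) ^ d * (L:ℝ) ^ d *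
            (gam k ^ ((ℓ:ℝ) / (k:ℝ))
              + gam k ^ ((d:ℝ) * (1 - (ℓ:ℝ) / (k:ℝ))) * Real.log (1 / gam k)) := by
  obtain ⟨Λ, hΛ, hL⟩ := aux_lip d J hJ
  obtain ⟨M, hM⟩ := hJ.bounded
  have hC1 : 0 ≤ 2 * Λ * √d * (4 + 4 * √d) ^ d := by positivity
  refine ⟨β * (2 * Λ * √d * (4 + 4 * √d) ^ d) + 3 * (d + 3), by positivity, ?_⟩
  intro L k ℓ _ hL2 hℓ hℓk s₀
  have h : ℓ ≤ k := hℓk.le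
  have ent := entropy_bound (d := d) (L := L) (by omega) h s₀
  have ene := fun s hs => energy_bound (d := d) (L := L) h β hβ J hJ.continuous M hM Λ hΛ
    hJ.support hL s₀ s hs
  have hls := log_sum_bound (Finset.univ.filter (fun s : ConfigSpace d L k =>
            coarse L ℓ (stepFun L k s) = coarse L ℓ (stepFun L k s₀)))
    ⟨s₀, by simp⟩ (fun s => -β * Ham L k J s) _ _
    (fun s hs => ene s (by simpa using hs))
  have hk0 : (k:ℝ) ≠ 0 := by
    have : k ≠ 0 := by omega
    exact_mod_cast this
  have e1 : gam k ^ ((ℓ:ℝ) / (k:ℝ)) = gam ℓ := by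
    unfold gam
    rw [zpow_neg, zpow_neg, zpow_natCast, zpow_natCast, ← Real.rpow_natCast, ← Real.rpow_natCast,
      ← Real.rpow_neg (by norm_num), ← Real.rpow_neg (by norm_num),
      ← Real.rpow_mul (by norm_num)]
    congr 1
    field_simp
  have e2 : gam k ^ ((d:ℝ) * (1 - (ℓ:ℝ) / (k:ℝ))) = (((2:ℝ) ^ (k - ℓ)) ^ d)⁻¹ := by
    unfold gam
    rw [zpow_neg, zpow_natCast, ← pow_mul, ← Real.rpow_natCast, ← Real.rpow_natCast,
      ← Real.rpow_neg (by norm_num), ← Real.rpow_neg (by norm_num),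
      ← Real.rpow_mul (by norm_num)]
    congr 1
    push_cast [Nat.cast_sub h]
    field_simp
  have e3 : Real.log (1 / gam k) = k * Real.log 2 := by
    unfold gam
    rw [zpow_neg, zpow_natCast, one_div, inv_inv, Real.log_pow]
  have e4 : ((2:ℝ) ^ k) ^ d * (L:ℝ) ^ d * (((2:ℝ) ^ (k - ℓ)) ^ d)⁻¹ = (2 ^ ℓ * L) ^ d := by
    have : (2:ℝ) ^ k = 2 ^ ℓ * 2 ^ (k - ℓ) := by rw [← pow_add, Nat.add_sub_cancel' h]
    rw [this, ← div_eq_mul_inv, ← mul_pow, ← div_pow]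
    congr 1
    field_simp
  have hcoef : 0 ≤ ((2:ℝ) ^ k) ^ d * (L:ℝ) ^ d * gam ℓ := by
    have := gam_pos ℓ
    positivity
  have hcoef2 : 0 ≤ ((2:ℝ) ^ ℓ * L) ^ d * (k * Real.log 2) := by
    have : 0 ≤ Real.log 2 := Real.log_nonneg (by norm_num)
    positivity
  rw [e1, e2, e3]
  have eR : (β * (2 * Λ * √d * (4 + 4 * √d) ^ d) + 3 * (d + 3)) * ((2:ℝ) ^ k) ^ d * (L:ℝ) ^ d *
      (gam ℓ + (((2:ℝ) ^ (k - ℓ)) ^ d)⁻¹ * (k * Real.log 2)) =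
      (β * (2 * Λ * √d * (4 + 4 * √d) ^ d) + 3 * (d + 3)) *
        (((2:ℝ) ^ k) ^ d * (L:ℝ) ^ d * gam ℓ) +
      (β * (2 * Λ * √d * (4 + 4 * √d) ^ d) + 3 * (d + 3)) *
        ((((2:ℝ) ^ ℓ * L) ^ d) * (k * Real.log 2)) := by
    rw [← e4]; ring
  rw [eR]
  have r1 : 0 ≤ 3 * ((d:ℝ) + 3) * (((2:ℝ) ^ k) ^ d * (L:ℝ) ^ d * gam ℓ) := by positivity
  have r2 : 0 ≤ (β * (2 * Λ * √d * (4 + 4 * √d) ^ d)) *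
        ((((2:ℝ) ^ ℓ * L) ^ d) * (k * Real.log 2)) := by positivity
  have eG : β * ((2:ℝ) ^ k) ^ d * GPL d L β J (coarse L ℓ (stepFun L k s₀)) =
      ((2:ℝ) ^ k) ^ d * (∫ x : Torus d L, ient (coarse L ℓ (stepFun L k s₀) x)) -
      β * ((2:ℝ) ^ k) ^ d / 2 * (∫ x : Torus d L, ∫ y : Torus d L, J (torusDist x y) *
        coarse L ℓ (stepFun L k s₀) x * coarse L ℓ (stepFun L k s₀) y) := by
    unfold GPL
    field_simp
  rw [eG]
  rw [abs_le] at *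
  constructor <;> linarith [hls.1, hls.2, ent.1, ent.2]
end

section
/- Let d ≥ 1, let L ≥ 2 be an integer, let β > 1, and let m ∈ (−1,1). Suppose σ* : T_L → [−1,1] is measurable with L^{−d}∫_{T_L} σ*(r) dr = m and F(σ*) = inf{ F(σ) : σ : T_L → [−1,1] measurable, L^{−d}∫_{T_L} σ(r) dr = m }. Then −1 < σ*(x) < 1 for almost every x, and there exists λ ∈ ℝ such that σ*(x) = tanh( β( ∫_{T_L} J(|x−y|) σ*(y) dy + λ ) ) for almost every x ∈ T_L; in particular σ* has a continuously differentiable version whose gradient is bounded by a constant depending only on d, β and J. -/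
open MeasureTheory Real

lemma ient_eq (s : ℝ) : ient s = - Real.binEntropy ((1 + s) / 2) := by
  unfold ient Real.binEntropy
  have : 1 - (1 + s) / 2 = (1 - s) / 2 := by ring
  rw [this, Real.log_inv, Real.log_inv]; ring

lemma ient_continuous : Continuous ient := by
  have : ient = fun s => - Real.binEntropy ((1 + s) / 2) := funext ient_eq
  rw [this]; fun_prop

lemma ient_abs_le {s : ℝ} (hs : s ∈ Set.Icc (-1:ℝ) 1) : |ient s| ≤ Real.log 2 := by
  rw [ient_eq, abs_neg, abs_of_nonneg]
  · exact Real.binEntropy_le_log_two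
  · exact Real.binEntropy_nonneg (by linarith [hs.1]) (by linarith [hs.2])

lemma ient_convex {s t θ : ℝ} (hs : s ∈ Set.Icc (-1:ℝ) 1) (ht : t ∈ Set.Icc (-1:ℝ) 1)
    (h0 : 0 ≤ θ) (h1 : θ ≤ 1) :
    ient (s + θ * (t - s)) ≤ ient s + θ * (ient t - ient s) := by
  have h := Real.strictConcave_binEntropy.concaveOn.2
    (show (1 + s) / 2 ∈ Set.Icc (0:ℝ) 1 from ⟨by linarith [hs.1], by linarith [hs.2]⟩)
    (show (1 + t) / 2 ∈ Set.Icc (0:ℝ) 1 from ⟨by linarith [ht.1], by linarith [ht.2]⟩)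
    (show 0 ≤ 1 - θ by linarith) h0 (by ring)
  simp only [smul_eq_mul] at h
  have e : (1 - θ) * ((1 + s) / 2) + θ * ((1 + t) / 2) = (1 + (s + θ * (t - s))) / 2 := by ring
  rw [e] at h
  rw [ient_eq, ient_eq, ient_eq]
  linarith

lemma xlogx_ge {p q : ℝ} (hp : 0 ≤ p) (hq : 0 < q) :
    p - q ≤ p * Real.log p - p * Real.log q ∧
      (p * Real.log p - p * Real.log q = p - q → p = q) := by
  rcases hp.eq_or_lt with rfl | hp
  · constructor
    · simp; linarith
    · intro h; simp at h; linarith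
  · have e : p * Real.log p - p * Real.log q = - (p * Real.log (q / p)) := by
      rw [Real.log_div hq.ne' hp.ne']; ring
    have hpos : 0 < q / p := div_pos hq hp
    have e2 : p * (q / p - 1) = q - p := by field_simp
    constructor
    · rw [e]
      have := mul_le_mul_of_nonneg_left (Real.log_le_sub_one_of_pos hpos) hp.le
      linarith
    · intro h
      by_contra hne
      have h1 : q / p ≠ 1 := fun h' => hne ((div_eq_one_iff_eq hp.ne').1 h').symm
      have := mul_lt_mul_of_pos_left (Real.log_lt_sub_one_of_pos hpos h1) hp
      linarith

lemma gibbs (a : ℝ) {s : ℝ} (hs : s ∈ Set.Icc (-1:ℝ) 1) :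
    ient (Real.tanh a) - a * Real.tanh a ≤ ient s - a * s ∧
    (ient s - a * s = ient (Real.tanh a) - a * Real.tanh a → s = Real.tanh a) := by
  have hc : 0 < 2 * Real.cosh a := by positivity
  have e1 : (1 + Real.tanh a) / 2 = Real.exp a / (2 * Real.cosh a) := by
    rw [Real.tanh_eq_sinh_div_cosh, ← Real.cosh_add_sinh]
    have := (Real.cosh_pos a).ne'
    field_simp
  have e2 : (1 - Real.tanh a) / 2 = Real.exp (-a) / (2 * Real.cosh a) := by
    rw [Real.tanh_eq_sinh_div_cosh, ← Real.cosh_sub_sinh]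
    have := (Real.cosh_pos a).ne'
    field_simp
  have l1 : Real.log ((1 + Real.tanh a) / 2) = a - Real.log (2 * Real.cosh a) := by
    rw [e1, Real.log_div (Real.exp_pos _).ne' hc.ne', Real.log_exp]
  have l2 : Real.log ((1 - Real.tanh a) / 2) = -a - Real.log (2 * Real.cosh a) := by
    rw [e2, Real.log_div (Real.exp_pos _).ne' hc.ne', Real.log_exp]
  have p1 : 0 < (1 + Real.tanh a) / 2 := by rw [e1]; positivity
  have p2 : 0 < (1 - Real.tanh a) / 2 := by rw [e2]; positivity
  have g1 := xlogx_ge (p := (1 + s) / 2) (by linarith [hs.1]) p1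
  have g2 := xlogx_ge (p := (1 - s) / 2) (by linarith [hs.2]) p2
  have ht : ient (Real.tanh a) - a * Real.tanh a = - Real.log (2 * Real.cosh a) := by
    unfold ient; rw [l1, l2]; ring
  rw [l1] at g1
  rw [l2] at g2
  rw [ht]
  unfold ient
  constructor
  · nlinarith [g1.1, g2.1]
  · intro h
    have : (1 + s) / 2 = (1 + Real.tanh a) / 2 := by
      apply g1.2
      nlinarith [g1.1, g2.1]
    linarith

lemma tanh_contDiff {n : WithTop ℕ∞} : ContDiff ℝ n Real.tanh := by
  have : Real.tanh = fun x => Real.sinh x / Real.cosh x := funext Real.tanh_eq_sinh_div_cosh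
  rw [this]
  exact Real.contDiff_sinh.div Real.contDiff_cosh (fun x => (Real.cosh_pos x).ne')

lemma tanh_hasDerivAt (x : ℝ) : HasDerivAt Real.tanh (1 / Real.cosh x ^ 2) x := by
  have : Real.tanh = fun x => Real.sinh x / Real.cosh x := funext Real.tanh_eq_sinh_div_cosh
  rw [this]
  have h := (Real.hasDerivAt_sinh x).div (Real.hasDerivAt_cosh x) (Real.cosh_pos x).ne'
  have e : Real.cosh x * Real.cosh x - Real.sinh x * Real.sinh x = 1 := by
    have := Real.cosh_sq x
    nlinarith
  rw [e] at h
  exact h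

lemma tanh_mono : Monotone Real.tanh :=
  monotone_of_hasDerivAt_nonneg (fun x => tanh_hasDerivAt x) (fun x => by positivity)

lemma tanh_mem (x : ℝ) : Real.tanh x ∈ Set.Ioo (-1:ℝ) 1 :=
  ⟨Real.neg_one_lt_tanh x, Real.tanh_lt_one x⟩

lemma intble_of_bdd {X : Type*} [MeasurableSpace X] {μ : Measure X} [IsFiniteMeasure μ]
    {f : X → ℝ} (hf : Measurable f) {C : ℝ} (h : ∀ x, |f x| ≤ C) : Integrable f μ :=
  Integrable.of_bound hf.aestronglyMeasurable C (Filter.Eventually.of_forall h)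

theorem abstract_EL {X : Type*} [MeasurableSpace X] (μ : Measure X) [IsFiniteMeasure μ]
    (k : X → X → ℝ) (hk : Measurable (Function.uncurry k)) (hsym : ∀ x y, k x y = k y x)
    (M : ℝ) (hM : ∀ x y, |k x y| ≤ M) (β : ℝ) (hβ : 0 < β)
    (m : ℝ) (hm : m ∈ Set.Ioo (-1:ℝ) 1)
    (σ : X → ℝ) (hσm : Measurable σ) (hσ : ∀ x, σ x ∈ Set.Icc (-1:ℝ) 1)
    (hσi : ∫ x, σ x ∂μ = m * μ.real Set.univ)
    (hmin : ∀ τ : X → ℝ, Measurable τ → (∀ x, τ x ∈ Set.Icc (-1:ℝ) 1) →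
      ∫ x, τ x ∂μ = m * μ.real Set.univ →
      (1 / β) * (∫ x, ient (σ x) ∂μ) - (1 / 2) * ∫ x, ∫ y, k x y * σ x * σ y ∂μ ∂μ ≤
      (1 / β) * (∫ x, ient (τ x) ∂μ) - (1 / 2) * ∫ x, ∫ y, k x y * τ x * τ y ∂μ ∂μ) :
    ∃ lam : ℝ, ∀ᵐ x ∂μ, σ x = Real.tanh (β * ((∫ y, k x y * σ y ∂μ) + lam)) := by
  set h : X → ℝ := fun x => ∫ y, k x y * σ y ∂μ with hh
  have habs : ∀ {τ : X → ℝ}, (∀ x, τ x ∈ Set.Icc (-1:ℝ) 1) → ∀ x, |τ x| ≤ 1 :=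
    fun hτ x => abs_le.2 (hτ x)
  have hkx : ∀ x, Measurable (k x) := fun x => hk.comp measurable_prodMk_left
  -- measurability of convolution
  have hconvm : ∀ τ : X → ℝ, Measurable τ → Measurable (fun x => ∫ y, k x y * τ y ∂μ) := by
    intro τ hτ
    have : StronglyMeasurable (Function.uncurry (fun x y => k x y * τ y)) :=
      (hk.mul (hτ.comp measurable_snd)).stronglyMeasurable
    exact this.integral_prod_right.measurable
  have hconvb : ∀ (τ : X → ℝ) (C : ℝ), (∀ x, |τ x| ≤ C) → ∀ x, |∫ y, k x y * τ y ∂μ| ≤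
      M * C * μ.real Set.univ := by
    intro τ C hτ x
    refine norm_integral_le_of_norm_le_const (μ := μ) (f := fun y => k x y * τ y) (Filter.Eventually.of_forall fun y => ?_)
    rw [Real.norm_eq_abs, abs_mul]
    exact mul_le_mul (hM x y) (hτ y) (abs_nonneg _) ((abs_nonneg _).trans (hM x y))
  have hhm : Measurable h := hconvm σ hσm
  set H : ℝ := M * 1 * μ.real Set.univ with hH
  have hhb : ∀ x, |h x| ≤ H := hconvb σ 1 (habs hσ)
  -- linearised inequality
  have key : ∀ τ : X → ℝ, Measurable τ → (∀ x, τ x ∈ Set.Icc (-1:ℝ) 1) →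
      ∫ x, τ x ∂μ = m * μ.real Set.univ →
      0 ≤ (1 / β) * (∫ x, ient (τ x) ∂μ - ∫ x, ient (σ x) ∂μ) - ∫ x, h x * (τ x - σ x) ∂μ := by
    intro τ hτm hτ hτi
    set δ : X → ℝ := fun x => τ x - σ x with hδ
    have hδm : Measurable δ := hτm.sub hσm
    have hδb : ∀ x, |δ x| ≤ 2 := fun x => by
      have h1 := hτ x; have h2 := hσ x
      rw [abs_le]; constructor <;> simp only [hδ] <;> linarith [h1.1, h1.2, h2.1, h2.2]
    set g : X → ℝ := fun x => ∫ y, k x y * δ y ∂μ with hg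
    have hgm : Measurable g := hconvm δ hδm
    have hgb := hconvb δ 2 hδb
    set Q : ℝ := ∫ x, δ x * g x ∂μ with hQ
    have inti : ∀ ρ : X → ℝ, Measurable ρ → (∀ x, ρ x ∈ Set.Icc (-1:ℝ) 1) →
        Integrable (fun x => ient (ρ x)) μ := fun ρ h1 h2 =>
      intble_of_bdd (ient_continuous.measurable.comp h1) (fun x => ient_abs_le (h2 x))
    have ibm : ∀ (u v : X → ℝ) (a b : ℝ), Measurable u → Measurable v → (∀ x, |u x| ≤ a) →
        (∀ x, |v x| ≤ b) → Integrable (fun x => u x * v x) μ := by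
      intro u v a b hu hv hua hvb
      refine intble_of_bdd (hu.mul hv) (C := a * b) fun x => ?_
      rw [abs_mul]
      exact mul_le_mul (hua x) (hvb x) (abs_nonneg _) ((abs_nonneg _).trans (hua x))
    have hin : ∀ (ρ : X → ℝ) x, ∫ y, k x y * ρ x * ρ y ∂μ = ρ x * ∫ y, k x y * ρ y ∂μ := by
      intro ρ x
      rw [← integral_const_mul]
      congr 1; ext y; ring
    have hsymm : ∫ x, σ x * g x ∂μ = ∫ x, δ x * h x ∂μ := by
      have e1 : ∀ x, σ x * g x = ∫ y, σ x * (k x y * δ y) ∂μ := fun x =>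
        (integral_const_mul _ _).symm
      have e2 : ∀ x, δ x * h x = ∫ y, δ x * (k x y * σ y) ∂μ := fun x =>
        (integral_const_mul _ _).symm
      simp_rw [e1, e2]
      rw [integral_integral_swap]
      · congr 1; ext x; congr 1; ext y; rw [hsym y x]; ring
      · refine intble_of_bdd (C := 1 * (M * 2)) ?_ ?_
        · exact (hσm.comp measurable_fst).mul (hk.mul (hδm.comp measurable_snd))
        · rintro ⟨x, y⟩
          simp only [Function.uncurry, abs_mul]
          have hM0 : 0 ≤ M := (abs_nonneg _).trans (hM x y)
          have := hM x y
          have := hδb y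
          have := habs hσ x
          gcongr
    have main : ∀ t : ℝ, 0 < t → t ≤ 1 → 0 ≤ ((1 / β) * (∫ x, ient (τ x) ∂μ -
        ∫ x, ient (σ x) ∂μ) - ∫ x, h x * (τ x - σ x) ∂μ) - t * (Q / 2) := by
      intro t t0 t1
      have adm : ∀ x, σ x + t * δ x ∈ Set.Icc (-1:ℝ) 1 := fun x => by
        have h1 := hτ x; have h2 := hσ x
        simp only [hδ]
        constructor <;> nlinarith [h1.1, h1.2, h2.1, h2.2]
      have hρm : Measurable (fun x => σ x + t * δ x) := hσm.add (hδm.const_mul t)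
      have iσ : Integrable σ μ := intble_of_bdd hσm (habs hσ)
      have iτ : Integrable τ μ := intble_of_bdd hτm (habs hτ)
      have iδ : Integrable δ μ := intble_of_bdd hδm hδb
      have hmass : ∫ x, (σ x + t * δ x) ∂μ = m * μ.real Set.univ := by
        rw [integral_add iσ (iδ.const_mul t), integral_const_mul, integral_sub iτ iσ, hτi, hσi]
        ring
      have hm1 := hmin _ hρm adm hmass
      have hin2 := hin (fun x => σ x + t * δ x)
      simp_rw [hin2, hin σ] at hm1
      have hent : ∫ x, ient (σ x + t * δ x) ∂μ ≤
          ∫ x, ient (σ x) ∂μ + t * (∫ x, ient (τ x) ∂μ - ∫ x, ient (σ x) ∂μ) := by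
        have q1 : Integrable (fun x => t * (ient (τ x) - ient (σ x))) μ :=
          ((inti τ hτm hτ).sub (inti σ hσm hσ)).const_mul t
        rw [← integral_sub (inti τ hτm hτ) (inti σ hσm hσ), ← integral_const_mul,
          ← integral_add (inti σ hσm hσ) q1]
        refine integral_mono (inti _ hρm adm) ((inti σ hσm hσ).add q1) fun x => ?_
        exact ient_convex (hσ x) (hτ x) t0.le t1
      have hconv : ∀ x, ∫ y, k x y * (σ y + t * δ y) ∂μ = h x + t * g x := by
        intro x
        rw [hh, hg]
        simp only
        rw [← integral_const_mul, ← integral_add]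
        · congr 1; ext y; ring
        · exact ibm _ _ _ _ (hkx x) hσm (hM x) (habs hσ)
        · exact (ibm _ _ _ _ (hkx x) hδm (hM x) hδb).const_mul t
      have hquad : ∫ x, (σ x + t * δ x) * ∫ y, k x y * (σ y + t * δ y) ∂μ ∂μ =
          ∫ x, σ x * h x ∂μ + 2 * t * ∫ x, δ x * h x ∂μ + t ^ 2 * Q := by
        simp_rw [hconv]
        have i1 := ibm _ _ _ _ hσm hhm (habs hσ) hhb
        have i2 := ibm _ _ _ _ hσm hgm (habs hσ) hgb
        have i3 := ibm _ _ _ _ hδm hhm hδb hhb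
        have i4 := ibm _ _ _ _ hδm hgm hδb hgb
        have : ∀ x, (σ x + t * δ x) * (h x + t * g x) =
          (σ x * h x + t * (σ x * g x)) + (t * (δ x * h x) + t ^ 2 * (δ x * g x)) := fun x => by
            ring
        simp_rw [this]
        have q1 : Integrable (fun x => σ x * h x + t * (σ x * g x)) μ :=
          i1.add (i2.const_mul _)
        have q2 : Integrable (fun x => t * (δ x * h x) + t ^ 2 * (δ x * g x)) μ :=
          (i3.const_mul _).add (i4.const_mul _)
        rw [integral_add q1 q2, integral_add i1 (i2.const_mul _), integral_add (i3.const_mul _) (i4.const_mul _),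
          integral_const_mul, integral_const_mul, integral_const_mul, hsymm]
        ring
      rw [hquad] at hm1
      have hcomm : ∫ x, h x * (τ x - σ x) ∂μ = ∫ x, δ x * h x ∂μ := by
        congr 1; ext x; simp only [hδ]; ring
      rw [hcomm]
      have hb : 0 < 1 / β := by positivity
      have hent2 := mul_le_mul_of_nonneg_left hent hb.le
      have : 0 ≤ t * (((1 / β) * (∫ x, ient (τ x) ∂μ -
        ∫ x, ient (σ x) ∂μ) - ∫ x, δ x * h x ∂μ) - t * (Q / 2)) := by
        have hσh : ∫ x, σ x * ∫ y, k x y * σ y ∂μ ∂μ = ∫ x, σ x * h x ∂μ := rfl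
        rw [hσh] at hm1
        nlinarith [hent2, hm1]
      exact nonneg_of_mul_nonneg_right this t0
    set A := (1 / β) * (∫ x, ient (τ x) ∂μ - ∫ x, ient (σ x) ∂μ) -
      ∫ x, h x * (τ x - σ x) ∂μ with hA
    have hlim : Filter.Tendsto (fun t : ℝ => A - t * (Q / 2)) (nhdsWithin 0 (Set.Ioi 0))
        (nhds (A - 0 * (Q / 2))) :=
      ((by fun_prop : Continuous fun t : ℝ => A - t * (Q / 2)).tendsto 0).mono_left
        nhdsWithin_le_nhds
    rw [zero_mul, sub_zero] at hlim
    refine ge_of_tendsto hlim ?_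
    filter_upwards [Ioc_mem_nhdsGT (zero_lt_one (α := ℝ))] with t ht
    exact main t ht.1 ht.2
  -- choose the multiplier
  have htm : ∀ lam : ℝ, Measurable (fun x => Real.tanh (β * (h x + lam))) := fun lam =>
    (tanh_contDiff (n := 0)).continuous.measurable.comp ((hhm.add_const lam).const_mul β)
  have htb : ∀ lam x, |Real.tanh (β * (h x + lam))| ≤ 1 := fun lam x =>
    abs_le.2 ⟨(tanh_mem _).1.le, (tanh_mem _).2.le⟩
  have hcont : Continuous (fun lam : ℝ => ∫ x, Real.tanh (β * (h x + lam)) ∂μ) := by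
    refine continuous_of_dominated (bound := fun _ => 1) (fun lam => (htm lam).aestronglyMeasurable)
      (fun lam => Filter.Eventually.of_forall (htb lam)) (integrable_const _)
      (Filter.Eventually.of_forall fun x => ?_)
    exact (tanh_contDiff (n := 0)).continuous.comp (by fun_prop)
  obtain ⟨a, ha⟩ : ∃ a, Real.tanh a = m := ⟨_, Real.tanh_artanh hm⟩
  have hconst : ∫ _x : X, m ∂μ = m * μ.real Set.univ := by simp [mul_comm]
  obtain ⟨lam, hlam⟩ : ∃ lam : ℝ, ∫ x, Real.tanh (β * (h x + lam)) ∂μ = m * μ.real Set.univ := by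
    refine mem_range_of_exists_le_of_exists_ge hcont ⟨a / β - H, ?_⟩ ⟨a / β + H, ?_⟩
    · rw [← hconst]
      refine integral_mono (intble_of_bdd (htm _) (htb _)) (integrable_const _) fun x => ?_
      simp only
      rw [← ha]
      apply tanh_mono
      have : a = β * (a / β) := by field_simp
      conv_rhs => rw [this]
      exact mul_le_mul_of_nonneg_left (by linarith [(abs_le.1 (hhb x)).2]) hβ.le
    · rw [← hconst]
      refine integral_mono (integrable_const _) (intble_of_bdd (htm _) (htb _)) fun x => ?_
      simp only
      rw [← ha]
      apply tanh_mono
      have : a = β * (a / β) := by field_simp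
      conv_lhs => rw [this]
      exact mul_le_mul_of_nonneg_left (by linarith [(abs_le.1 (hhb x)).1]) hβ.le
  refine ⟨lam, ?_⟩
  set τ : X → ℝ := fun x => Real.tanh (β * (h x + lam)) with hτ
  have hτI : ∀ x, τ x ∈ Set.Icc (-1:ℝ) 1 := fun x => Set.Ioo_subset_Icc_self (tanh_mem _)
  have hkey := key τ (htm lam) hτI hlam
  set D : X → ℝ := fun x => (ient (σ x) - β * (h x + lam) * σ x) -
    (ient (τ x) - β * (h x + lam) * τ x) with hD
  have hD0 : ∀ x, 0 ≤ D x := fun x => sub_nonneg.2 (gibbs (β * (h x + lam)) (hσ x)).1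
  have i1 : Integrable (fun x => ient (σ x)) μ :=
    intble_of_bdd (ient_continuous.measurable.comp hσm) (fun x => ient_abs_le (hσ x))
  have i2 : Integrable (fun x => ient (τ x)) μ :=
    intble_of_bdd (ient_continuous.measurable.comp (htm lam)) (fun x => ient_abs_le (hτI x))
  have i3 : Integrable (fun x => h x * (τ x - σ x)) μ := by
    refine intble_of_bdd (hhm.mul ((htm lam).sub hσm)) (C := H * 2) fun x => ?_
    rw [abs_mul]
    refine mul_le_mul (hhb x) ?_ (abs_nonneg _) ((abs_nonneg _).trans (hhb x))
    have h1 := hτI x; have h2 := hσ x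
    rw [abs_le]; constructor <;> linarith [h1.1, h1.2, h2.1, h2.2]
  have i4 : Integrable τ μ := intble_of_bdd (htm lam) (htb lam)
  have i5 : Integrable σ μ := intble_of_bdd hσm (habs hσ)
  have hDe : D = fun x => ((ient (σ x) - ient (τ x)) + β * (h x * (τ x - σ x))) +
      β * lam * (τ x - σ x) := by
    ext x; simp only [hD]; ring
  have j1 := i1.sub i2
  have j2 := i3.const_mul β
  have j3 := (i4.sub i5).const_mul (β * lam)
  have hDi : Integrable D μ := by rw [hDe]; exact (j1.add j2).add j3
  have hDint : ∫ x, D x ∂μ = (∫ x, ient (σ x) ∂μ - ∫ x, ient (τ x) ∂μ) +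
      β * ∫ x, h x * (τ x - σ x) ∂μ := by
    rw [hDe]
    have e1 := integral_add (j1.add j2) j3
    have e2 := integral_add j1 j2
    simp only [Pi.add_apply, Pi.sub_apply] at e1 e2
    rw [e1, e2, integral_const_mul, integral_const_mul, integral_sub i1 i2, integral_sub i4 i5,
      hlam, hσi]
    ring
  have hDle : ∫ x, D x ∂μ ≤ 0 := by
    rw [hDint]
    have := mul_nonneg hβ.le hkey
    have e : β * ((1 / β) * (∫ x, ient (τ x) ∂μ - ∫ x, ient (σ x) ∂μ) -
      ∫ x, h x * (τ x - σ x) ∂μ) = (∫ x, ient (τ x) ∂μ - ∫ x, ient (σ x) ∂μ) -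
      β * ∫ x, h x * (τ x - σ x) ∂μ := by field_simp
    rw [e] at this
    linarith
  have hDz : ∫ x, D x ∂μ = 0 := le_antisymm hDle (integral_nonneg hD0)
  have hae := (integral_eq_zero_iff_of_nonneg hD0 hDi).1 hDz
  filter_upwards [hae] with x hx
  exact (gibbs (β * (h x + lam)) (hσ x)).2 (sub_eq_zero.1 hx)

lemma kac_one {d : ℕ} {J : ℝ → ℝ} (hJ : KacPotential d J) : J 1 = 0 := by
  have h1 : Filter.Tendsto J (nhdsWithin 1 (Set.Ioi 1)) (nhds (J 1)) :=
    (hJ.continuous.tendsto 1).mono_left nhdsWithin_le_nhds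
  have h2 : Filter.Tendsto J (nhdsWithin 1 (Set.Ioi 1)) (nhds 0) := by
    refine tendsto_const_nhds.congr' ?_
    filter_upwards [self_mem_nhdsWithin] with r hr
    exact (hJ.support r hr).symm
  exact tendsto_nhds_unique h1 h2

lemma kac_zero {d : ℕ} {J : ℝ → ℝ} (hJ : KacPotential d J) {r : ℝ} (hr : 1 ≤ r) : J r = 0 := by
  rcases hr.eq_or_lt with rfl | hr
  · exact kac_one hJ
  · exact hJ.support r hr

lemma kac_lip {d : ℕ} {J : ℝ → ℝ} (hJ : KacPotential d J) :
    ∃ C : NNReal, LipschitzWith C (fun w : EuclideanSpace ℝ (Fin d) => J ‖w‖) := by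
  obtain ⟨C, hC⟩ := hJ.smooth.exists_lipschitzOnWith (by simp) (convex_Icc _ _) isCompact_Icc
  refine ⟨C, LipschitzWith.of_dist_le_mul fun x y => ?_⟩
  have e : ∀ r : ℝ, J r = J (min r 1) := fun r => by
    rcases le_total r 1 with h | h
    · rw [min_eq_left h]
    · rw [min_eq_right h, kac_zero hJ h, kac_one hJ]
  have hm : ∀ w : EuclideanSpace ℝ (Fin d), min ‖w‖ 1 ∈ Set.Icc (0:ℝ) 1 := fun w =>
    ⟨le_min (norm_nonneg _) zero_le_one, min_le_right _ _⟩
  rw [e ‖x‖, e ‖y‖]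
  refine (hC.dist_le_mul _ (hm x) _ (hm y)).trans ?_
  refine mul_le_mul_of_nonneg_left ?_ C.coe_nonneg
  rw [Real.dist_eq, dist_eq_norm]
  refine (abs_min_sub_min_le_max _ _ _ _).trans ?_
  simp only [sub_self, abs_zero]
  exact max_le (abs_norm_sub_norm_le x y) (norm_nonneg _)

lemma kac_contDiffAt {d : ℕ} {J : ℝ → ℝ} (hJ : KacPotential d J) (w : EuclideanSpace ℝ (Fin d))
    (h0 : w ≠ 0) (h1 : ‖w‖ ≠ 1) :
    ContDiffAt ℝ 1 (fun w : EuclideanSpace ℝ (Fin d) => J ‖w‖) w := by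
  rcases lt_or_gt_of_ne h1 with h | h
  · have hJ' : ContDiffAt ℝ 1 J ‖w‖ :=
      ((hJ.smooth.contDiffAt (Icc_mem_nhds (norm_pos_iff.2 h0) h)).of_le (by simp))
    exact hJ'.comp w (contDiffAt_norm ℝ h0)
  · have : (fun w : EuclideanSpace ℝ (Fin d) => J ‖w‖) =ᶠ[nhds w] fun _ => 0 := by
      filter_upwards [continuous_norm.continuousAt.eventually (lt_mem_nhds h)] with v hv
      exact hJ.support _ hv
    exact contDiffAt_const.congr_of_eventuallyEq this

lemma kac_ae {d : ℕ} (hd : 1 ≤ d) {J : ℝ → ℝ} (hJ : KacPotential d J) :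
    ∀ᵐ w : EuclideanSpace ℝ (Fin d),
      ContDiffAt ℝ 1 (fun w : EuclideanSpace ℝ (Fin d) => J ‖w‖) w := by
  have : Nonempty (Fin d) := ⟨⟨0, hd⟩⟩
  have h1 := (measure_eq_zero_iff_ae_notMem).1
    (Measure.addHaar_sphere (volume : Measure (EuclideanSpace ℝ (Fin d))) 0 1)
  have h2 := (measure_eq_zero_iff_ae_notMem).1
    (Measure.addHaar_sphere (volume : Measure (EuclideanSpace ℝ (Fin d))) 0 0)
  filter_upwards [h1, h2] with w hw1 hw2
  exact kac_contDiffAt hJ w (by simpa using hw2) (by simpa using hw1)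

lemma conv_regular {E : Type*} [NormedAddCommGroup E] [NormedSpace ℝ E] [FiniteDimensional ℝ E]
    [MeasurableSpace E] [BorelSpace E] (μ : Measure E) [μ.IsAddHaarMeasure]
    (K : E → ℝ) (C : NNReal) (hK : LipschitzWith C K) (hsupp : ∀ w, 1 ≤ ‖w‖ → K w = 0)
    (hae : ∀ᵐ w ∂μ, ContDiffAt ℝ 1 K w) (s : E → ℝ) (hs : Measurable s) (hs1 : ∀ w, |s w| ≤ 1) :
    ContDiff ℝ 1 (fun v => ∫ w, K (v - w) * s w ∂μ) ∧
    ∀ v, ‖fderiv ℝ (fun v => ∫ w, K (v - w) * s w ∂μ) v‖ ≤ C * μ.real (Metric.closedBall 0 1) := by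
  have haev : ∀ v, ∀ᵐ w ∂μ, ContDiffAt ℝ 1 K (v - w) := fun v =>
    (quasiMeasurePreserving_sub_left μ v).ae hae
  have hfd : ∀ w, 1 < ‖w‖ → fderiv ℝ K w = 0 := by
    intro w hw
    have : K =ᶠ[nhds w] fun _ => 0 := by
      filter_upwards [continuous_norm.continuousAt.eventually (lt_mem_nhds hw)] with v hv
      exact hsupp _ (le_of_lt hv)
    rw [this.fderiv_eq]; simp
  have hfn : ∀ w, ‖fderiv ℝ K w‖ ≤ C := fun w => norm_fderiv_le_of_lipschitz ℝ hK
  have hm : ∀ v, AEStronglyMeasurable (fun w => s w • fderiv ℝ K (v - w)) μ := fun v =>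
    (hs.smul ((measurable_fderiv ℝ K).comp (measurable_const.sub measurable_id))).aestronglyMeasurable
  have hbi : ∀ (v : E) (r : ℝ),
      Integrable ((Metric.closedBall v r).indicator (fun _ => (C : ℝ))) μ := fun v r =>
    (integrable_indicator_iff Metric.isClosed_closedBall.measurableSet).2
      (integrableOn_const (by exact measure_closedBall_lt_top.ne))
  have hbound : ∀ v w, ‖s w • fderiv ℝ K (v - w)‖ ≤
      (Metric.closedBall v 1).indicator (fun _ => (C : ℝ)) w := by
    intro v w
    by_cases hw : w ∈ Metric.closedBall v 1
    · rw [Set.indicator_of_mem hw, norm_smul]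
      calc _ ≤ 1 * (C:ℝ) := mul_le_mul (hs1 w) (hfn _) (norm_nonneg _) zero_le_one
        _ = C := one_mul _
    · rw [Set.indicator_of_notMem hw, hfd, smul_zero, norm_zero]
      rw [Metric.mem_closedBall, not_le, dist_comm, dist_eq_norm] at hw
      exact hw
  have hder : ∀ v, HasFDerivAt (fun v => ∫ w, K (v - w) * s w ∂μ)
      (∫ w, s w • fderiv ℝ K (v - w) ∂μ) v := by
    intro v
    refine (hasFDerivAt_integral_of_dominated_loc_of_lip
      (F := fun v w => K (v - w) * s w) (s := Metric.ball v 1)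
      (bound := (Metric.closedBall v 2).indicator (fun _ => (C : ℝ)))
      (Metric.ball_mem_nhds v one_pos) ?_ ?_ (hm v) ?_ (hbi v 2) ?_).2
    · refine Filter.Eventually.of_forall fun u => ?_
      exact ((hK.continuous.measurable.comp
        (measurable_const.sub measurable_id)).mul hs).aestronglyMeasurable
    · obtain ⟨B, hB⟩ : ∃ B, ∀ w, |K w| ≤ B := by
        refine ⟨C * 2 + |K 0|, fun w => ?_⟩
        by_cases hw : 1 ≤ ‖w‖
        · rw [hsupp w hw, abs_zero]; positivity
        · have := hK.dist_le_mul w 0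
          rw [Real.dist_eq, dist_zero_right] at this
          have h2 : (C:ℝ) * ‖w‖ ≤ C * 2 :=
            mul_le_mul_of_nonneg_left (by linarith) C.coe_nonneg
          have h3 := abs_sub_abs_le_abs_sub (K w) (K 0)
          linarith
      have hi : Integrable ((Metric.closedBall v 1).indicator (fun _ => (B : ℝ))) μ :=
        (integrable_indicator_iff Metric.isClosed_closedBall.measurableSet).2
          (integrableOn_const (by exact measure_closedBall_lt_top.ne))
      refine hi.mono' ((hK.continuous.measurable.comp
        (measurable_const.sub measurable_id)).mul hs).aestronglyMeasurable
        (Filter.Eventually.of_forall fun w => ?_)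
      by_cases hw : w ∈ Metric.closedBall v 1
      · rw [Set.indicator_of_mem hw, norm_mul]
        have hB0 : 0 ≤ B := (abs_nonneg _).trans (hB 0)
        calc _ ≤ B * 1 := mul_le_mul (hB _) (hs1 w) (abs_nonneg _) hB0
          _ = B := mul_one _
      · rw [Set.indicator_of_notMem hw]
        rw [Metric.mem_closedBall, not_le, dist_comm, dist_eq_norm] at hw
        simp [hsupp _ hw.le]
    · refine Filter.Eventually.of_forall fun w => ?_
      by_cases hw : w ∈ Metric.closedBall v 2
      · rw [Set.indicator_of_mem hw]
        refine LipschitzOnWith.of_dist_le_mul fun x _ y _ => ?_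
        have := hK.dist_le_mul (x - w) (y - w)
        rw [dist_sub_right] at this
        simp only [Real.coe_nnabs, NNReal.abs_eq]
        rw [Real.dist_eq, ← sub_mul, abs_mul]
        rw [Real.dist_eq] at this
        calc _ ≤ |K (x - w) - K (y - w)| * 1 :=
              mul_le_mul_of_nonneg_left (hs1 w) (abs_nonneg _)
          _ ≤ _ := by rw [mul_one]; exact this
      · rw [Set.indicator_of_notMem hw]
        rw [Metric.mem_closedBall, not_le] at hw
        have hz : ∀ x ∈ Metric.ball v 1, K (x - w) * s w = 0 := by
          intro x hx
          rw [Metric.mem_ball] at hx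
          have : 1 ≤ ‖x - w‖ := by
            rw [← dist_eq_norm]
            have := dist_triangle w x v
            rw [dist_comm w x] at this
            linarith
          rw [hsupp _ this, zero_mul]
        refine LipschitzOnWith.of_dist_le_mul fun x hx y hy => ?_
        simp only [hz x hx, hz y hy, dist_self]
        positivity
    · filter_upwards [haev v] with w hw
      have h1 : HasFDerivAt K (fderiv ℝ K (v - w)) (v - w) :=
        (hw.differentiableAt one_ne_zero).hasFDerivAt
      have h2 := h1.comp v ((hasFDerivAt_id v).sub_const w)
      exact h2.mul_const (s w)
  have hfe : fderiv ℝ (fun v => ∫ w, K (v - w) * s w ∂μ) =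
      fun v => ∫ w, s w • fderiv ℝ K (v - w) ∂μ := funext fun v => (hder v).fderiv
  constructor
  · rw [contDiff_one_iff_fderiv]
    refine ⟨fun v => (hder v).differentiableAt, ?_⟩
    rw [hfe, continuous_iff_continuousAt]
    intro v
    refine continuousAt_of_dominated (bound := (Metric.closedBall v 2).indicator
      (fun _ => (C : ℝ))) (Filter.Eventually.of_forall hm) ?_ (hbi v 2) ?_
    · filter_upwards [Metric.ball_mem_nhds v one_pos] with u hu
      refine Filter.Eventually.of_forall fun w => (hbound u w).trans ?_
      refine Set.indicator_le_indicator_of_subset ?_ (fun _ => C.coe_nonneg) w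
      rw [Metric.mem_ball] at hu
      exact Metric.closedBall_subset_closedBall' (by linarith)
    · filter_upwards [haev v] with w hw
      have hc : ContinuousAt (fderiv ℝ K) (v - w) :=
        (hw.fderiv_right (m := 0) (by simp)).continuousAt
      have hc2 : ContinuousAt (fun u => fderiv ℝ K (u - w)) v :=
        ContinuousAt.comp (f := fun u => u - w) hc (by fun_prop)
      exact hc2.const_smul (s w)
  · intro v
    rw [hfe]
    refine (norm_integral_le_of_norm_le (hbi v 1)
      (Filter.Eventually.of_forall (hbound v))).trans ?_
    rw [integral_indicator Metric.isClosed_closedBall.measurableSet, setIntegral_const,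
      smul_eq_mul, mul_comm]
    rw [Measure.real, Measure.real, Measure.addHaar_closedBall_center]

lemma torusDist_continuous {d L : ℕ} :
    Continuous (fun p : Torus d L × Torus d L => torusDist p.1 p.2) := by
  unfold torusDist
  fun_prop

lemma kernel_continuous {d L : ℕ} {J : ℝ → ℝ} (hJ : Continuous J) (x : Torus d L) :
    Continuous (fun y : Torus d L => J (torusDist x y)) := by
  have h : Continuous (fun y : Torus d L => torusDist x y) := by
    unfold torusDist
    fun_prop
  exact hJ.comp h

lemma unfold_conv {d L : ℕ} [Fact ((0:ℝ) < L)] (hL : 2 ≤ L) {J : ℝ → ℝ} (hJ : KacPotential d J)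
    (σ : Torus d L → ℝ) (hσ : Measurable σ) (v : EuclideanSpace ℝ (Fin d)) :
    ∫ y, J (torusDist (fun i => ((v i : ℝ) : AddCircle (L:ℝ))) y) * σ y =
      ∫ w, J ‖v - w‖ * liftTorus σ w := by
  have hL2 : (2:ℝ) ≤ L := by exact_mod_cast hL
  have mp := (measurePreserving_pi _ _
    (fun i : Fin d => AddCircle.measurePreserving_mk (L:ℝ) (v i - L / 2)))
  rw [← Measure.restrict_pi_pi] at mp
  have hmeas : Measurable (fun y : Torus d L =>
      J (torusDist (fun i => ((v i : ℝ) : AddCircle (L:ℝ))) y) * σ y) := by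
    exact (kernel_continuous hJ.continuous _).measurable.mul hσ
  have e1 : ∫ y, J (torusDist (fun i => ((v i : ℝ) : AddCircle (L:ℝ))) y) * σ y =
      ∫ u in Set.univ.pi (fun i : Fin d => Set.Ioc (v i - L / 2) (v i - L / 2 + L)),
        J (torusDist (fun i => ((v i : ℝ) : AddCircle (L:ℝ)))
          (fun i => ((u i : ℝ) : AddCircle (L:ℝ)))) *
          σ (fun i => ((u i : ℝ) : AddCircle (L:ℝ))) := by
    rw [volume_pi, ← mp.map_eq, integral_map mp.measurable.aemeasurable
      hmeas.aestronglyMeasurable]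
    rfl
  have hnorm : ∀ u : Fin d → ℝ, ‖v - WithLp.toLp 2 u‖ = Real.sqrt (∑ i, (v i - u i) ^ 2) := by
    intro u
    rw [EuclideanSpace.norm_eq]
    simp
  rw [e1, setIntegral_congr_fun (g := fun u => J ‖v - WithLp.toLp 2 u‖ *
    liftTorus σ (WithLp.toLp 2 u))
    (MeasurableSet.univ_pi fun i => measurableSet_Ioc)]
  · rw [setIntegral_eq_integral_of_forall_compl_eq_zero]
    · exact (PiLp.volume_preserving_toLp (Fin d)).integral_comp
        (MeasurableEquiv.toLp 2 (Fin d → ℝ)).measurableEmbedding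
        (fun w => J ‖v - w‖ * liftTorus σ w)
    · intro u hu
      rw [Set.mem_univ_pi] at hu
      push Not at hu
      obtain ⟨i, hi⟩ := hu
      have h1 : 1 ≤ |v i - u i| := by
        by_contra hlt
        rw [not_le, abs_lt] at hlt
        exact hi ⟨by linarith [hlt.2], by linarith [hlt.1]⟩
      have h2 : |v i - u i| ≤ ‖v - WithLp.toLp 2 u‖ := by
        have := PiLp.norm_apply_le (v - WithLp.toLp 2 u) i
        simpa using this
      rw [kac_zero hJ (h1.trans h2), zero_mul]
  · intro u hu
    simp only [liftTorus]
    congr 2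
    rw [hnorm, torusDist]
    congr 1
    refine Finset.sum_congr rfl fun i _ => ?_
    have hi := hu i (Set.mem_univ i)
    have : dist ((v i : ℝ) : AddCircle (L:ℝ)) ((u i : ℝ) : AddCircle (L:ℝ)) = |v i - u i| := by
      rw [dist_eq_norm, ← AddCircle.coe_sub, AddCircle.norm_coe_eq_abs_iff _ (by linarith)]
      rw [abs_of_nonneg (by linarith : (0:ℝ) ≤ L), abs_le]
      constructor <;> linarith [hi.1, hi.2]
    rw [this, sq_abs]

lemma torus_vol {d L : ℕ} [Fact ((0:ℝ) < L)] :
    (volume : Measure (Torus d L)).real Set.univ = (L:ℝ) ^ d := by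
  rw [Measure.real, volume_pi, Measure.pi_univ]
  simp [AddCircle.measure_univ]

lemma torusDist_symm {d L : ℕ} (x y : Torus d L) : torusDist x y = torusDist y x := by
  unfold torusDist
  simp_rw [dist_comm]

/-- **Euler–Lagrange equation and regularity of constrained minimizers**: if `σ*` minimizes
`F` among measurable `σ : T_L → [−1,1]` with mean `m ∈ (−1,1)`, then `−1 < σ* < 1` a.e.,
there is `λ ∈ ℝ` with `σ*(x) = tanh(β(J ∗ σ*(x) + λ))` a.e., and `σ*` has a continuously
differentiable version whose gradient is bounded by a constant `C` depending only on
`d`, `β` and `J`. -/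
theorem minimizer_euler_lagrange (d : ℕ) (hd : 1 ≤ d) (β : ℝ) (hβ : 1 < β)
    (J : ℝ → ℝ) (hJ : KacPotential d J) :
    ∃ C : ℝ, 0 < C ∧
      ∀ (L : ℕ) [Fact ((0:ℝ) < L)], 2 ≤ L →
      ∀ m : ℝ, m ∈ Set.Ioo (-1:ℝ) 1 →
      ∀ σs : Torus d L → ℝ, Measurable σs → (∀ x, σs x ∈ Set.Icc (-1:ℝ) 1) →
        ((L:ℝ) ^ (-(d:ℤ)) * ∫ r, σs r) = m →
        (∀ σ : Torus d L → ℝ, Measurable σ → (∀ x, σ x ∈ Set.Icc (-1:ℝ) 1) →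
          ((L:ℝ) ^ (-(d:ℤ)) * ∫ r, σ r) = m → GPL d L β J σs ≤ GPL d L β J σ) →
        (∀ᵐ x ∂(volume : Measure (Torus d L)), σs x ∈ Set.Ioo (-1:ℝ) 1) ∧
        (∃ lam : ℝ, ∀ᵐ x ∂(volume : Measure (Torus d L)),
            σs x = Real.tanh (β * ((∫ y, J (torusDist x y) * σs y) + lam))) ∧
        (∃ σt : Torus d L → ℝ, σt =ᵐ[(volume : Measure (Torus d L))] σs ∧
            ContDiff ℝ 1 (liftTorus σt) ∧ ∀ v, ‖fderiv ℝ (liftTorus σt) v‖ ≤ C) := by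
  obtain ⟨Cl, hCl⟩ := kac_lip hJ
  obtain ⟨M, hM⟩ := hJ.bounded
  refine ⟨β * (Cl * (volume : Measure (EuclideanSpace ℝ (Fin d))).real
    (Metric.closedBall 0 1)) + 1, by positivity, ?_⟩
  intro L hLf hL m hm σs hσm hσ hσi hmin
  have hLp : (0:ℝ) < L := hLf.out
  have hmass : ∀ I : ℝ, (L:ℝ) ^ (-(d:ℤ)) * I = m ↔
      I = m * (volume : Measure (Torus d L)).real Set.univ := by
    intro I
    rw [torus_vol, zpow_neg, zpow_natCast]
    have : (L:ℝ) ^ d ≠ 0 := by positivity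
    rw [inv_mul_eq_iff_eq_mul₀ this, mul_comm]
  obtain ⟨lam, hlam⟩ := abstract_EL (volume : Measure (Torus d L))
    (fun x y => J (torusDist x y)) (hJ.continuous.comp torusDist_continuous).measurable
    (fun x y => by rw [torusDist_symm]) M (fun x y => hM _) β (by linarith) m hm σs hσm hσ
    ((hmass _).1 hσi) (fun τ h1 h2 h3 => hmin τ h1 h2 ((hmass _).2 h3))
  refine ⟨?_, ⟨lam, hlam⟩, ?_⟩
  · filter_upwards [hlam] with x hx
    rw [hx]
    exact tanh_mem _
  · refine ⟨fun x => Real.tanh (β * ((∫ y, J (torusDist x y) * σs y) + lam)), ?_, ?_⟩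
    · filter_upwards [hlam] with x hx
      exact hx.symm
    · have hreg := conv_regular (volume : Measure (EuclideanSpace ℝ (Fin d)))
        (fun w => J ‖w‖) Cl hCl (fun w hw => kac_zero hJ hw) (kac_ae hd hJ) (liftTorus σs)
        (hσm.comp (measurable_pi_lambda _ fun i => by
          exact (AddCircle.measurable_mk').comp (by fun_prop)))
        (fun w => abs_le.2 (hσ _))
      set h : EuclideanSpace ℝ (Fin d) → ℝ :=
        fun v => ∫ w, J ‖v - w‖ * liftTorus σs w with hh
      have e : liftTorus (fun x : Torus d L =>
          Real.tanh (β * ((∫ y, J (torusDist x y) * σs y) + lam))) =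
          fun v => Real.tanh (β * (h v + lam)) := by
        ext v
        simp only [liftTorus]
        rw [unfold_conv hL hJ σs hσm v]
      rw [e]
      have hc : ContDiff ℝ 1 h := hreg.1
      refine ⟨tanh_contDiff.comp (contDiff_const.mul (hc.add contDiff_const)), fun v => ?_⟩
      have hd1 : HasFDerivAt h (fderiv ℝ h v) v :=
        ((hc.differentiable one_ne_zero) v).hasFDerivAt
      have hd2 := (tanh_hasDerivAt (β * (h v + lam))).comp_hasFDerivAt v
        ((hd1.add_const lam).const_mul β)
      have hd3 : fderiv ℝ (fun v => Real.tanh (β * (h v + lam))) v = _ := hd2.fderiv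
      rw [hd3, norm_smul, norm_smul]
      have hb : ‖fderiv ℝ h v‖ ≤ Cl * (volume : Measure (EuclideanSpace ℝ (Fin d))).real
        (Metric.closedBall 0 1) := hreg.2 v
      have hβ0 : 0 < β := by linarith
      have ht : ‖1 / Real.cosh (β * (h v + lam)) ^ 2‖ ≤ 1 := by
        rw [Real.norm_of_nonneg (by positivity)]
        have := Real.one_le_cosh (β * (h v + lam))
        rw [div_le_one (by positivity)]
        nlinarith
      rw [Real.norm_of_nonneg hβ0.le]
      calc _ ≤ 1 * (β * (Cl * (volume : Measure (EuclideanSpace ℝ (Fin d))).real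
            (Metric.closedBall 0 1))) := by gcongr
        _ ≤ _ := by linarith
end
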